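/- arXiv:1708.06948 — 6 statements merged into one kernel-verified Lean document; each statement's English description precedes it below -/
import Mathlib

section
/- For every x ∈ ℝ, ξ_1,…,ξ_n ∈ ℝ, t ∈ [0,1) and σ_1,…,σ_n > 0, setting σ̂ = (∑_{i=1}^n σ_i^{-2})^{-1/2} and ξ̂ = σ̂² ∑_{i=1}^n σ_i^{-2} ξ_i, one has the product identity ∏_{i=1}^n h(x, ξ_i, t, σ_i) = h(x, ξ̂, t, σ̂). (This is the algebraic core of Proposition 2.7: the likelihood contributed by n simultaneously active information sources collapses into that of a single effective source.) -/
/-!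
Writing `S = ∑ σᵢ⁻²`, the exponents on the left add up to
`(x ∑ σᵢ⁻² ξᵢ - (t x² / 2) S) / (1 - t)`. Since `σ̂² = S⁻¹` and `ξ̂ = S⁻¹ ∑ σᵢ⁻² ξᵢ`, this is
the exponent on the right whenever `S ≠ 0`, that is, whenever there is at least one source.
-/

open MeasureTheory ProbabilityTheory Real Set Filter
open scoped ENNReal NNReal Classical

noncomputable section

/-- The Gaussian likelihood function `h(x,y,t,σ) = exp((x·y − t·x²/2)/(σ²·(1−t)))`. -/
def hfun (x y t σ : ℝ) : ℝ := Real.exp ((x * y - t * x ^ 2 / 2) / (σ ^ 2 * (1 - t)))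

/-- A process is a centered Gaussian process on `[0,1]` with covariance function `c` if every
finite real-linear combination of its values at times in `[0,1]` is a centered Gaussian random
variable with the variance induced by `c`. -/
def IsCenteredGaussianCov {Ω : Type*} [MeasurableSpace Ω] (P : Measure Ω)
    (β : ℝ → Ω → ℝ) (c : ℝ → ℝ → ℝ) : Prop :=
  ∀ (k : ℕ) (t : Fin k → ℝ), (∀ i, t i ∈ Set.Icc (0:ℝ) 1) → ∀ a : Fin k → ℝ,
    Measure.map (fun ω => ∑ i, a i * β (t i) ω) P
      = gaussianReal 0 (Real.toNNReal (∑ i, ∑ j, a i * a j * c (t i) (t j)))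

/-- A standard Brownian bridge on `[0,1]`: a measurable, path-continuous, centered Gaussian
process with covariance `min s t − s·t`. -/
def IsStdBrownianBridge {Ω : Type*} [MeasurableSpace Ω] (P : Measure Ω)
    (β : ℝ → Ω → ℝ) : Prop :=
  (∀ t, Measurable (β t)) ∧
  (∀ ω, ContinuousOn (fun t => β t ω) (Set.Icc 0 1)) ∧
  IsCenteredGaussianCov P β (fun s t => min s t - s * t)

/-- `ν` has finite exponential moments. -/
def FiniteExpMoments (ν : Measure ℝ) : Prop :=
  ∀ lam : ℝ, 0 < lam → Integrable (fun x => Real.exp (lam * |x|)) ν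

/-- The σ-algebra generated by the observations `ξ_s`, `0 ≤ s ≤ t`. -/
def sigmaUpTo {Ω : Type*} [MeasurableSpace Ω] (ξ : ℝ → Ω → ℝ) (t : ℝ) : MeasurableSpace Ω :=
  ⨆ s ∈ Set.Icc (0:ℝ) t, MeasurableSpace.comap (ξ s) inferInstance


/-- algebraic core of Proposition 2.7.
The product of the likelihoods of `n` simultaneously active information sources collapses into
the likelihood of a single effective source: `∏ᵢ h(x, ξᵢ, t, σᵢ) = h(x, ξ̂, t, σ̂)` where
`σ̂ = (∑ σᵢ⁻²)^{-1/2}` and `ξ̂ = σ̂² ∑ σᵢ⁻² ξᵢ`. -/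
theorem hfun_prod_effective
    (n : ℕ) (x : ℝ) (ξ : Fin n → ℝ) (t : ℝ) (ht : t ∈ Set.Ico (0:ℝ) 1)
    (σ : Fin n → ℝ) (hσ : ∀ i, 0 < σ i)
    (σhat : ℝ) (hσhat : σhat = (Real.sqrt (∑ i, ((σ i) ^ 2)⁻¹))⁻¹)
    (ξhat : ℝ) (hξhat : ξhat = σhat ^ 2 * ∑ i, ((σ i) ^ 2)⁻¹ * ξ i) :
    ∏ i, hfun x (ξ i) t (σ i) = hfun x ξhat t σhat := by
  -- The identity is that of the exponents; `S` is the total precision.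
  set S := ∑ i, ((σ i) ^ 2)⁻¹ with hS
  have hsq : σhat ^ 2 = S⁻¹ := by
    rw [hσhat, inv_pow, Real.sq_sqrt (Finset.sum_nonneg fun i _ => by positivity)]
  unfold hfun
  rw [← Real.exp_sum]
  congr 1
  have hL : ∑ i, (x * ξ i - t * x ^ 2 / 2) / ((σ i) ^ 2 * (1 - t))
      = (x * (∑ i, ((σ i) ^ 2)⁻¹ * ξ i) - t * x ^ 2 / 2 * S) / (1 - t) := by
    rw [hS, Finset.mul_sum, Finset.mul_sum, ← Finset.sum_sub_distrib, Finset.sum_div]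
    refine Finset.sum_congr rfl fun i _ => ?_
    rw [div_eq_mul_inv, mul_inv]
    ring
  rw [hL, hξhat, hsq]
  have h1 : (1 - t) ≠ 0 := by linarith [ht.2]
  rcases Nat.eq_zero_or_pos n with rfl | hn
  -- With no sources `S = 0`, and both exponents vanish (the right one as a division by zero).
  · simp [hS]
  · have : 0 < S := Finset.sum_pos (fun i _ => inv_pos.2 (pow_pos (hσ i) 2)) ⟨⟨0, hn⟩, by simp⟩
    field_simp

end
end

section
/- Let X be a real random variable with law ν having finite exponential moments, let β^(1),…,β^(n) be mutually independent standard Brownian bridges on [0,1], independent of X, let σ_1,…,σ_n > 0, and set ξ^(i)_t = t·X + σ_i β^(i)_t. Fix times t_1,…,t_n ∈ (0,1). Then for every bounded measurable φ : ℝ → ℝ, almost surely E[φ(X) | σ(ξ^(1)_{t_1},…,ξ^(n)_{t_n})] = (∫ φ(x) ∏_{i=1}^n h(x, ξ^(i)_{t_i}, t_i, σ_i) ν(dx)) / (∫ ∏_{i=1}^n h(x, ξ^(i)_{t_i}, t_i, σ_i) ν(dx)). (The Bayes formula established in the proof of Proposition 2.3.) -/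
/-!
Write `W i = σ i * β i (t i)`, a centred Gaussian of variance `σ i ^ 2 * t i * (1 - t i)`, so that
the observations are `Z i = t i * X + W i`. Let `γ` be the law of `(W i)ᵢ`, a product measure.
Given `X = x`, the vector `Z` is `γ` shifted by `(t i * x)ᵢ`, and the Gaussian likelihood ratio of
this shift is exactly `∏ i, hfun x (y i) (t i) (σ i)` (`gaussianReal_eq_withDensity_hfun`,
`pi_withDensity_ofReal`). Since `X` is independent of `W` (`map_prodMk_eq_prod_pi`), the pair
`(X, Z)` has density `H(x, y) = ∏ i, hfun x (y i) (t i) (σ i)` with respect to `ν ⊗ γ`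
(`map_shift_prod_pi`).

The claim is then the Bayes formula for a strictly positive joint density
(`condExp_comap_eq_of_joint_density`): with `N(y) = ∫ φ(x) H(x, y) ν(dx)` and
`D(y) = ∫ H(x, y) ν(dx)`, Fubini gives, for every measurable set `A` of observations,
`E[(N / D)(Z); Z ∈ A] = ∫_A (N / D) D dγ = ∫_A N dγ = E[φ(X); Z ∈ A]`.
The denominator `D` is positive and finite everywhere, as `hfun` is positive and bounded in `x`.
-/

open MeasureTheory ProbabilityTheory Real Set Filter
open scoped ENNReal NNReal Classical

noncomputable section

/-! ### Gaussian likelihood ratios -/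

/-- Likelihood ratio of a shifted Gaussian with respect to the centred Gaussian of the same
variance. -/
lemma gaussianReal_eq_withDensity (a : ℝ) {v : ℝ≥0} (hv : v ≠ 0) :
    gaussianReal a v = (gaussianReal 0 v).withDensity
      (fun y => ENNReal.ofReal (Real.exp ((a * y - a ^ 2 / 2) / v))) := by
  have hv' : (v : ℝ) ≠ 0 := by exact_mod_cast hv
  rw [gaussianReal_of_var_ne_zero _ hv, gaussianReal_of_var_ne_zero _ hv,
    ← withDensity_mul _ (measurable_gaussianPDF _ _) (by fun_prop)]
  congr 1
  ext y
  simp only [Pi.mul_apply, gaussianPDF, gaussianPDFReal]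
  rw [← ENNReal.ofReal_mul (by positivity), mul_assoc _ (Real.exp _) (Real.exp _), ← Real.exp_add]
  congr 3
  field_simp
  ring

/-- `hfun x · t σ` is the likelihood ratio of an observation `t x + σ β_t` of the signal `x`
against pure noise `σ β_t`, both having variance `σ² t (1 - t)`. -/
lemma gaussianReal_eq_withDensity_hfun (x : ℝ) {t σ : ℝ} (ht : t ∈ Set.Ioo (0:ℝ) 1)
    (hσ : 0 < σ) :
    gaussianReal (t * x) (Real.toNNReal (σ ^ 2 * (t * (1 - t))))
      = (gaussianReal 0 (Real.toNNReal (σ ^ 2 * (t * (1 - t))))).withDensity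
        (fun y => ENNReal.ofReal (hfun x y t σ)) := by
  have h1 : 0 < 1 - t := sub_pos.2 ht.2
  have h0 : 0 < t := ht.1
  have hpos : 0 < σ ^ 2 * (t * (1 - t)) := by positivity
  rw [gaussianReal_eq_withDensity _ (by simpa using hpos)]
  congr 1
  ext y
  have h : ((t * x) * y - (t * x) ^ 2 / 2) / (σ ^ 2 * (t * (1 - t)))
      = (x * y - t * x ^ 2 / 2) / (σ ^ 2 * (1 - t)) := by
    field_simp
  rw [hfun, Real.coe_toNNReal _ hpos.le, h]

lemma pi_withDensity_ofReal {ι : Type*} [Fintype ι] {γ : ι → Measure ℝ}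
    [∀ i, IsProbabilityMeasure (γ i)] {f : ι → ℝ → ℝ} (hf : ∀ i, Measurable (f i))
    (hf0 : ∀ i y, 0 ≤ f i y)
    [∀ i, IsProbabilityMeasure ((γ i).withDensity (fun y => ENNReal.ofReal (f i y)))] :
    Measure.pi (fun i => (γ i).withDensity (fun y => ENNReal.ofReal (f i y)))
      = (Measure.pi γ).withDensity (fun y => ENNReal.ofReal (∏ i, f i (y i))) := by
  have hint : ∀ i, Integrable (f i) (γ i) := fun i => by
    refine ⟨(hf i).aestronglyMeasurable, ?_⟩
    rw [hasFiniteIntegral_iff_ofReal (ae_of_all _ (hf0 i))]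
    have := measure_univ (μ := (γ i).withDensity (fun y => ENNReal.ofReal (f i y)))
    rw [withDensity_apply _ MeasurableSet.univ, Measure.restrict_univ] at this
    rw [this]; exact ENNReal.one_lt_top
  symm
  refine (Measure.pi_eq (fun s hs => ?_)).symm
  have hS : MeasurableSet (Set.univ.pi s) := MeasurableSet.univ_pi hs
  have hind : ∀ i, Integrable ((s i).indicator (f i)) (γ i) := fun i => (hint i).indicator (hs i)
  have hind0 : ∀ i y, 0 ≤ (s i).indicator (f i) y :=
    fun i y => Set.indicator_nonneg (fun y _ => hf0 i y) y
  have hprod : (Set.univ.pi s).indicator (fun y : ι → ℝ => ENNReal.ofReal (∏ i, f i (y i)))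
      = fun y => ENNReal.ofReal (∏ i, (s i).indicator (f i) (y i)) := by
    ext y
    by_cases hy : y ∈ Set.univ.pi s
    · rw [Set.indicator_of_mem hy]
      congr 1
      exact Finset.prod_congr rfl fun i _ => (Set.indicator_of_mem (hy i trivial) _).symm
    · rw [Set.indicator_of_notMem hy]
      obtain ⟨i, hi⟩ : ∃ i, y i ∉ s i := by simpa [Set.mem_univ_pi] using hy
      rw [Finset.prod_eq_zero (Finset.mem_univ i) (Set.indicator_of_notMem hi _),
        ENNReal.ofReal_zero]
  rw [withDensity_apply _ hS, ← lintegral_indicator hS, hprod,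
    ← ofReal_integral_eq_lintegral_ofReal (Integrable.fintype_prod hind)
      (ae_of_all _ fun y => Finset.prod_nonneg fun i _ => hind0 i _),
    integral_fintype_prod_eq_prod,
    ENNReal.ofReal_prod_of_nonneg fun i _ => integral_nonneg (hind0 i)]
  refine Finset.prod_congr rfl fun i _ => ?_
  rw [withDensity_apply _ (hs i), ← lintegral_indicator (hs i),
    ofReal_integral_eq_lintegral_ofReal (hind i) (ae_of_all _ (hind0 i))]
  refine lintegral_congr fun y => ?_
  by_cases hy : y ∈ s i <;> simp [hy]

/-! ### Bayes formula for a joint density -/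

/-- Abstract Bayes formula: if `(X, Z)` has density `H > 0` with respect to a product of
probability measures `ν ⊗ γ`, then `E[φ(X) | Z]` is the ratio of the `H(·, Z)`-weighted
`ν`-integrals. Here `ν` need not be the law of `X`. -/
lemma condExp_comap_eq_of_joint_density {Ω E : Type*} [MeasurableSpace Ω] [mE : MeasurableSpace E]
    {P : Measure Ω} [IsProbabilityMeasure P] {X : Ω → ℝ} {Z : Ω → E} (hX : Measurable X)
    (hZ : Measurable Z) {ν : Measure ℝ} [IsProbabilityMeasure ν] {γ : Measure E}
    [IsProbabilityMeasure γ] {H : ℝ → E → ℝ} (hH : Measurable (Function.uncurry H))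
    (hH0 : ∀ x y, 0 < H x y) (hHint : ∀ y, Integrable (fun x => H x y) ν)
    (hjoint : P.map (fun ω => (X ω, Z ω))
      = (ν.prod γ).withDensity (fun p => ENNReal.ofReal (H p.1 p.2)))
    {φ : ℝ → ℝ} (hφ : Measurable φ) {C : ℝ} (hC : ∀ x, |φ x| ≤ C) :
    P[fun ω => φ (X ω) | mE.comap Z]
      =ᵐ[P] fun ω => (∫ x, φ x * H x (Z ω) ∂ν) / (∫ x, H x (Z ω) ∂ν) := by
  have hH' : Measurable (fun p : ℝ × E => H p.1 p.2) := hH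
  have hXZ : Measurable (fun ω => (X ω, Z ω)) := hX.prodMk hZ
  set N : E → ℝ := fun y => ∫ x, φ x * H x y ∂ν with hN
  set D : E → ℝ := fun y => ∫ x, H x y ∂ν with hD
  have hNm : Measurable N := by
    refine (StronglyMeasurable.integral_prod_left (μ := ν) (f := fun x y => φ x * H x y) ?_).measurable
    exact ((hφ.comp measurable_fst).mul hH').stronglyMeasurable
  have hDm : Measurable D :=
    (StronglyMeasurable.integral_prod_left (μ := ν) (f := H) hH.stronglyMeasurable).measurable
  have hD0 : ∀ y, 0 < D y := fun y => by
    refine (integral_pos_iff_support_of_nonneg (fun x => (hH0 x y).le) (hHint y)).2 ?_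
    have : Function.support (fun x => H x y) = Set.univ := by
      ext x; simp [(hH0 x y).ne']
    simp [this]
  have hNint : ∀ y, Integrable (fun x => φ x * H x y) ν := fun y =>
    (hHint y).bdd_mul hφ.aestronglyMeasurable (ae_of_all _ hC)
  have hR : ∀ y, |N y / D y| ≤ C := fun y => by
    rw [abs_div, abs_of_pos (hD0 y), div_le_iff₀ (hD0 y)]
    calc |N y| ≤ ∫ x, |φ x * H x y| ∂ν := abs_integral_le_integral_abs
      _ ≤ ∫ x, C * H x y ∂ν := by
        refine integral_mono (hNint y).abs ((hHint y).const_mul C) fun x => ?_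
        simp only [abs_mul, abs_of_pos (hH0 x y)]
        exact mul_le_mul_of_nonneg_right (hC x) (hH0 x y).le
      _ = C * D y := integral_const_mul _ _
  -- The density integrates to one because it represents the law of `(X, Z)`.
  have hHI : Integrable (fun p : ℝ × E => H p.1 p.2) (ν.prod γ) := by
    refine ⟨hH'.aestronglyMeasurable, ?_⟩
    rw [hasFiniteIntegral_iff_ofReal (f := fun p : ℝ × E => H p.1 p.2) (ae_of_all _ fun p : ℝ × E => (hH0 p.1 p.2).le)]
    have h1 := congrArg (fun μ => μ Set.univ) hjoint
    simp only [withDensity_apply _ MeasurableSet.univ, Measure.restrict_univ,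
      Measure.map_apply hXZ MeasurableSet.univ, Set.preimage_univ, measure_univ] at h1
    rw [← h1]; exact ENNReal.one_lt_top
  have key : ∀ g : ℝ × E → ℝ, Measurable g → (∀ p, |g p| ≤ C) →
      ∫ ω, g (X ω, Z ω) ∂P = ∫ y, ∫ x, g (x, y) * H x y ∂ν ∂γ := fun g hg hgC => by
    have h1 : ∫ ω, g (X ω, Z ω) ∂P = ∫ p, g p ∂(P.map (fun ω => (X ω, Z ω))) :=
      (integral_map hXZ.aemeasurable hg.aestronglyMeasurable).symm
    rw [h1, hjoint, integral_withDensity_eq_integral_toReal_smul hH'.ennreal_ofReal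
      (ae_of_all _ fun _ => ENNReal.ofReal_lt_top)]
    have h2 : ∀ p : ℝ × E, (ENNReal.ofReal (H p.1 p.2)).toReal • g p = g p * H p.1 p.2 :=
      fun p => by rw [ENNReal.toReal_ofReal (hH0 _ _).le, smul_eq_mul, mul_comm]
    simp only [h2]
    exact integral_prod_symm _ (hHI.bdd_mul hg.aestronglyMeasurable (ae_of_all _ hgC))
  have hC0 : 0 ≤ C := (abs_nonneg _).trans (hC 0)
  have hRm : Measurable (fun y => N y / D y) := hNm.div hDm
  symm
  refine ae_eq_condExp_of_forall_setIntegral_eq hZ.comap_le ?_ ?_ ?_ ?_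
  · exact Integrable.of_bound (hφ.comp hX).aestronglyMeasurable C (ae_of_all _ fun ω => hC _)
  · intro s _ _
    exact (Integrable.of_bound (hRm.comp hZ).aestronglyMeasurable C
      (ae_of_all _ fun ω => hR _)).integrableOn
  · rintro _ ⟨A, hA, rfl⟩ _
    have hbd : ∀ (g : ℝ × E → ℝ), (∀ p, |g p| ≤ C) →
        ∀ p, |(Prod.snd ⁻¹' A).indicator g p| ≤ C := fun g hg p => by
      by_cases hp : p ∈ (Prod.snd ⁻¹' A : Set (ℝ × E))
      · simpa [Set.indicator_of_mem hp] using hg p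
      · simpa [Set.indicator_of_notMem hp] using hC0
    have hset : ∀ (g : ℝ × E → ℝ), ∫ ω in Z ⁻¹' A, g (X ω, Z ω) ∂P
        = ∫ ω, (Prod.snd ⁻¹' A).indicator g (X ω, Z ω) ∂P := fun g => by
      rw [← integral_indicator (hZ hA)]
      rfl
    have e1 := (hset fun p => N p.2 / D p.2).trans
      (key _ ((hRm.comp measurable_snd).indicator (measurable_snd hA)) (hbd _ fun p => hR p.2))
    have e2 := (hset fun p => φ p.1).trans
      (key _ ((hφ.comp measurable_fst).indicator (measurable_snd hA)) (hbd _ fun p => hC p.1))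
    refine e1.trans (Eq.trans ?_ e2.symm)
    refine integral_congr_ae (ae_of_all _ fun y => ?_)
    by_cases hy : y ∈ A
    · have hi : ∀ (g : ℝ × E → ℝ) x, (Prod.snd ⁻¹' A).indicator g (x, y) = g (x, y) :=
        fun g x => Set.indicator_of_mem (s := Prod.snd ⁻¹' A) hy g
      simp only [hi]
      -- `∫ x, (N y / D y) * H x y ∂ν = (N y / D y) * D y = N y`
      rw [integral_const_mul]
      exact div_mul_cancel₀ (N y) (hD0 y).ne'
    · have hi : ∀ (g : ℝ × E → ℝ) x, (Prod.snd ⁻¹' A).indicator g (x, y) = 0 :=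
        fun g x => Set.indicator_of_notMem (s := Prod.snd ⁻¹' A) hy g
      simp only [hi, zero_mul]
  · exact (hRm.comp (comap_measurable Z)).aestronglyMeasurable

/-! ### Joint law of signal and observations -/

lemma measurable_hfun {α : Type*} [MeasurableSpace α] {f g : α → ℝ} (hf : Measurable f)
    (hg : Measurable g) (t σ : ℝ) : Measurable (fun a => hfun (f a) (g a) t σ) := by
  unfold hfun
  fun_prop

/-- Completing the square bounds the likelihood uniformly in the signal `x`, so its integral
against any probability measure is finite. -/
lemma hfun_le (x y : ℝ) {t σ : ℝ} (ht : t ∈ Set.Ioo (0:ℝ) 1) :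
    hfun x y t σ ≤ Real.exp (y ^ 2 / (2 * t) / (σ ^ 2 * (1 - t))) := by
  have h0 : 0 < t := ht.1
  have h1 : 0 ≤ 1 - t := sub_nonneg.2 ht.2.le
  unfold hfun
  gcongr
  rw [le_div_iff₀ (by positivity)]
  nlinarith [sq_nonneg (y - t * x)]

lemma IsStdBrownianBridge.map_const_mul {Ω : Type*} [MeasurableSpace Ω] {P : Measure Ω}
    {β : ℝ → Ω → ℝ} (hβ : IsStdBrownianBridge P β) {t : ℝ} (ht : t ∈ Set.Ioo (0:ℝ) 1) (σ : ℝ) :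
    P.map (fun ω => σ * β t ω) = gaussianReal 0 (Real.toNNReal (σ ^ 2 * (t * (1 - t)))) := by
  have h := hβ.2.2 1 (fun _ => t) (fun _ => ⟨ht.1.le, ht.2.le⟩) (fun _ => σ)
  have e : σ * σ * (t - t * t) = σ ^ 2 * (t * (1 - t)) := by ring
  simpa [e] using h

/-- If `X` and the `W i` are measurable with respect to the members of an independent family of
σ-algebras indexed by `Option ι`, the joint law of `(X, (W i)ᵢ)` is the product of the marginals. -/
lemma map_prodMk_eq_prod_pi {Ω ι : Type*} [Fintype ι] [m0 : MeasurableSpace Ω] {P : Measure Ω}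
    [IsProbabilityMeasure P] {X : Ω → ℝ} (hX : Measurable X) {W : ι → Ω → ℝ}
    (hW : ∀ i, Measurable (W i)) {m : Option ι → MeasurableSpace Ω} (hm : iIndep m P)
    (hm0 : ∀ j, m j ≤ m0)
    (hmX : MeasurableSpace.comap X inferInstance ≤ m none)
    (hmW : ∀ i, MeasurableSpace.comap (W i) inferInstance ≤ m (some i)) :
    P.map (fun ω => (X ω, fun i => W i ω))
      = (P.map X).prod (Measure.pi fun i => P.map (W i)) := by
  have hWind : iIndepFun W P := by
    rw [iIndepFun_iff]
    intro s f hf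
    have h := iIndep.meas_biInter (m := m) (μ := P) (S := s.map Function.Embedding.some)
      (s := fun j => j.elim Set.univ f) hm (by
        intro j hj
        obtain ⟨i, hi, rfl⟩ := Finset.mem_map.1 hj
        exact hmW i _ (hf i hi))
    simpa using h
  have hXW : IndepFun X (fun ω i => W i ω) P := by
    rw [IndepFun_iff_Indep]
    refine indep_of_indep_of_le_left (indep_of_indep_of_le_right
      (indep_iSup_of_disjoint hm0 hm (S := {none}) (T := Set.range some) (by simp)) ?_) ?_
    · rw [MeasurableSpace.pi, MeasurableSpace.comap_iSup]
      refine iSup_le fun i => ?_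
      rw [MeasurableSpace.comap_comp]
      exact (hmW i).trans (le_iSup₂_of_le (some i) ⟨i, rfl⟩ le_rfl)
    · simpa using hmX
  rw [hXW.map_prod_eq_prod_map_map hX.aemeasurable (measurable_pi_lambda _ hW).aemeasurable,
    (iIndepFun_iff_map_fun_eq_pi_map fun i => (hW i).aemeasurable).1 hWind]

/-- Adding the drift `t i * x` to the noise coordinates changes the product law of signal and noise
by the density `∏ i, hfun x (y i) (t i) (σ i)`. -/
lemma map_shift_prod_pi {ι : Type*} [Fintype ι] (ν : Measure ℝ) [IsProbabilityMeasure ν]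
    {t σ : ι → ℝ} (ht : ∀ i, t i ∈ Set.Ioo (0:ℝ) 1) (hσ : ∀ i, 0 < σ i)
    {γ : ι → Measure ℝ}
    (hγ : ∀ i, γ i = gaussianReal 0 (Real.toNNReal (σ i ^ 2 * (t i * (1 - t i))))) :
    (ν.prod (Measure.pi γ)).map (fun p : ℝ × (ι → ℝ) => (p.1, fun i => t i * p.1 + p.2 i))
      = (ν.prod (Measure.pi γ)).withDensity
        (fun p => ENNReal.ofReal (∏ i, hfun p.1 (p.2 i) (t i) (σ i))) := by
  obtain rfl : γ = fun i => gaussianReal 0 (Real.toNNReal (σ i ^ 2 * (t i * (1 - t i)))) :=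
    funext hγ
  set γ : ι → Measure ℝ :=
    fun i => gaussianReal 0 (Real.toNNReal (σ i ^ 2 * (t i * (1 - t i)))) with hγdef
  -- For a fixed signal `x`, shift and reweight the noise coordinate by coordinate.
  have hfib : ∀ x : ℝ, (Measure.pi γ).map (fun w i => t i * x + w i)
      = (Measure.pi γ).withDensity
        (fun y => ENNReal.ofReal (∏ i, hfun x (y i) (t i) (σ i))) := fun x => by
    have hshift : ∀ i, (γ i).map (fun w => t i * x + w)
        = gaussianReal (t i * x) (Real.toNNReal (σ i ^ 2 * (t i * (1 - t i)))) := fun i => by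
      rw [hγdef, gaussianReal_map_const_add, zero_add]
    have hdens := fun i => gaussianReal_eq_withDensity_hfun x (ht i) (hσ i)
    have : ∀ i, IsProbabilityMeasure
        ((γ i).withDensity (fun y => ENNReal.ofReal (hfun x y (t i) (σ i)))) := fun i => by
      rw [hγdef, ← hdens i]; infer_instance
    have : ∀ i, SigmaFinite ((γ i).map (fun w => t i * x + w)) := fun i => by
      rw [hshift i]; infer_instance
    rw [Measure.pi_map_pi (fun i => by fun_prop), ← pi_withDensity_ofReal
      (f := fun i y => hfun x y (t i) (σ i))
      (fun i => measurable_hfun measurable_const measurable_id _ _)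
      (fun i y => (Real.exp_pos _).le)]
    congr 1
    ext1 i
    rw [hshift i, hdens i]
  have hT : Measurable (fun p : ℝ × (ι → ℝ) => (p.1, fun i => t i * p.1 + p.2 i)) := by fun_prop
  have hHm : Measurable (fun p : ℝ × (ι → ℝ) =>
      ENNReal.ofReal (∏ i, hfun p.1 (p.2 i) (t i) (σ i))) :=
    (Finset.measurable_prod _ fun i _ =>
      measurable_hfun measurable_fst (by fun_prop) _ _).ennreal_ofReal
  ext s hs
  rw [Measure.map_apply hT hs, Measure.prod_apply (hT hs), withDensity_apply _ hs,
    ← lintegral_indicator hs, lintegral_prod _ (hHm.indicator hs).aemeasurable]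
  refine lintegral_congr fun x => ?_
  have hsx : MeasurableSet (Prod.mk x ⁻¹' s) := measurable_prodMk_left hs
  have h := congrArg (fun μ => μ (Prod.mk x ⁻¹' s)) (hfib x)
  simp only [Measure.map_apply (show Measurable (fun (w : ι → ℝ) i => t i * x + w i) by fun_prop)
    hsx, withDensity_apply _ hsx, ← lintegral_indicator hsx] at h
  exact h

/-- Bayes formula from the proof of Proposition 2.3.
For mutually independent standard Brownian bridges independent of `X`, times `tᵢ ∈ (0,1)`, and
bounded measurable `φ`, the conditional expectation of `φ(X)` given the observations
`ξ⁽¹⁾_{t₁},…,ξ⁽ⁿ⁾_{tₙ}` is the `h`-weighted ratio of integrals against the law `ν` of `X`. -/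
theorem bayes_formula_conditional_expectation
    {Ω : Type*} [m0 : MeasurableSpace Ω] (P : Measure Ω) [IsProbabilityMeasure P]
    (n : ℕ) (X : Ω → ℝ) (hX : Measurable X)
    (ν : Measure ℝ) [IsProbabilityMeasure ν] (hlaw : Measure.map X P = ν)
    (hν : FiniteExpMoments ν)
    (β : Fin n → ℝ → Ω → ℝ) (hβ : ∀ i, IsStdBrownianBridge P (β i))
    (hindep : iIndep (fun j : Option (Fin n) =>
        Option.rec (MeasurableSpace.comap X inferInstance)
          (fun i => sigmaUpTo (β i) 1) j) P)
    (σ : Fin n → ℝ) (hσ : ∀ i, 0 < σ i)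
    (ξ : Fin n → ℝ → Ω → ℝ) (hξ : ∀ i t ω, ξ i t ω = t * X ω + σ i * β i t ω)
    (t : Fin n → ℝ) (ht : ∀ i, t i ∈ Set.Ioo (0:ℝ) 1)
    (φ : ℝ → ℝ) (hφm : Measurable φ) (C : ℝ) (hφb : ∀ x, |φ x| ≤ C) :
    P[fun ω => φ (X ω) | ⨆ i, MeasurableSpace.comap (fun ω => ξ i (t i) ω) inferInstance]
      =ᵐ[P] fun ω =>
        (∫ x, φ x * ∏ i, hfun x (ξ i (t i) ω) (t i) (σ i) ∂ν) /
          (∫ x, ∏ i, hfun x (ξ i (t i) ω) (t i) (σ i) ∂ν) := by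
  subst hlaw
  have ht01 : ∀ i, t i ∈ Set.Icc (0:ℝ) 1 := fun i => ⟨(ht i).1.le, (ht i).2.le⟩
  have hBm : ∀ i s, Measurable (β i s) := fun i => (hβ i).1
  have hWm : ∀ i, Measurable (fun ω => σ i * β i (t i) ω) := fun i => (hBm i _).const_mul _
  have hZm : Measurable (fun ω i => ξ i (t i) ω) := by
    refine measurable_pi_lambda _ fun i => ?_
    simp only [hξ]
    exact (hX.const_mul _).add (hWm i)
  have hγ := fun i => (hβ i).map_const_mul (ht i) (σ i)
  have hlawXW := map_prodMk_eq_prod_pi hX hWm hindep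
    (by
      rintro (_ | i)
      · exact hX.comap_le
      · exact iSup₂_le fun s _ => (hBm i s).comap_le)
    le_rfl
    (fun i => by
      have hle : MeasurableSpace.comap (β i (t i)) inferInstance ≤ sigmaUpTo (β i) 1 :=
        le_iSup₂_of_le (t i) (ht01 i) le_rfl
      exact ((comap_measurable (β i (t i))).const_mul (σ i)).comap_le.trans hle)
  have : ∀ i, IsProbabilityMeasure (P.map (fun ω => σ i * β i (t i) ω)) :=
    fun i => Measure.isProbabilityMeasure_map (hWm i).aemeasurable
  have hjoint : P.map (fun ω => (X ω, fun i => ξ i (t i) ω))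
      = ((P.map X).prod (Measure.pi fun i => P.map (fun ω => σ i * β i (t i) ω))).withDensity
        (fun p => ENNReal.ofReal (∏ i, hfun p.1 (p.2 i) (t i) (σ i))) := by
    rw [← map_shift_prod_pi (P.map X) ht hσ hγ, ← hlawXW,
      Measure.map_map (by fun_prop) (hX.prodMk (measurable_pi_lambda _ hWm))]
    simp only [hξ, Function.comp_def]
  have hsig : (⨆ i, MeasurableSpace.comap (fun ω => ξ i (t i) ω) inferInstance)
      = MeasurableSpace.comap (fun ω i => ξ i (t i) ω) MeasurableSpace.pi := by
    rw [MeasurableSpace.pi, MeasurableSpace.comap_iSup]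
    simp only [MeasurableSpace.comap_comp, Function.comp_def]
  rw [hsig]
  have hHm : Measurable (fun p : ℝ × (Fin n → ℝ) => ∏ i, hfun p.1 (p.2 i) (t i) (σ i)) :=
    Finset.measurable_prod _ fun i _ => measurable_hfun measurable_fst (by fun_prop) _ _
  have hpos : ∀ (x : ℝ) (y : Fin n → ℝ), 0 < ∏ i, hfun x (y i) (t i) (σ i) :=
    fun x y => Finset.prod_pos fun i _ => Real.exp_pos _
  refine condExp_comap_eq_of_joint_density (H := fun x y => ∏ i, hfun x (y i) (t i) (σ i))
    hX hZm hHm hpos (fun y => ?_) hjoint hφm hφb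
  refine Integrable.of_bound (hHm.comp measurable_prodMk_right).aestronglyMeasurable
    (∏ i, Real.exp (y i ^ 2 / (2 * t i) / (σ i ^ 2 * (1 - t i)))) (ae_of_all _ fun x => ?_)
  rw [Real.norm_of_nonneg (hpos x y).le]
  exact Finset.prod_le_prod (fun i _ => (Real.exp_pos _).le) fun i _ => hfun_le x (y i) (ht i)

end
end

section
/- Let X be a real random variable with law ν having finite exponential moments, let β^(1),…,β^(n) be mutually independent standard Brownian bridges on [0,1], independent of X, let σ_1,…,σ_n > 0, and set ξ^(i)_t = t·X + σ_i β^(i)_t. For each i let 0 < t_{i,1} < ⋯ < t_{i,k_i} < 1 be finitely many times. Then for every bounded measurable φ : ℝ → ℝ, almost surely E[φ(X) | σ(ξ^(i)_{t_{i,j}} : 1 ≤ i ≤ n, 1 ≤ j ≤ k_i)] = E[φ(X) | σ(ξ^(1)_{t_{1,k_1}},…,ξ^(n)_{t_{n,k_n}})]; that is, the conditional law of X given the observations of all coordinates at all past times depends only on the most recent observation of each coordinate. (Lemma 2.2, part 1.) -/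
/-!
For a Brownian bridge `β` and times `s ≤ u` in `(0,1)`, the residual `β_s - (s/u) β_u` is
uncorrelated with `β_u`, because `(s - s u) - (s/u) (u - u²) = 0`; joint Gaussianity turns this
into independence, simultaneously for finitely many `s` (`bridge_residual_indepFun`). The linear
part `s X` of `ξ_s = s X + σ β_s` cancels in the same combination, so that
`ξ_s - (s/u) ξ_u = σ (β_s - (s/u) β_u)`. Hence the σ-algebra of all observations is generated by
the most recent observations together with the residuals. As the bridges are independent of each
other and of `X`, the residuals of all coordinates are jointly independent of `X` and all the
latest bridge values (`indep_iSup_of_iIndep`). Information jointly independent of `X` and the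
latest observations leaves the conditional expectation of `φ(X)` unchanged (`condExp_sup_of_indep`).
-/

open MeasureTheory ProbabilityTheory Real Set Filter
open scoped ENNReal NNReal Classical

noncomputable section

/-- Enlarging the conditioning σ-algebra `m₂` by a σ-algebra `m₃` independent of `m₁ ⊔ m₂` does not
change the conditional expectation of an `m₁`-measurable function. -/
lemma condExp_sup_of_indep {Ω : Type*} {m₁ m₂ m₃ m : MeasurableSpace Ω} {μ : Measure Ω}
    [IsProbabilityMeasure μ] (h₁ : m₁ ≤ m) (h₂ : m₂ ≤ m) (h₃ : m₃ ≤ m) {f : Ω → ℝ}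
    (hf : StronglyMeasurable[m₁] f) (hfi : Integrable f μ) (hind : Indep (m₁ ⊔ m₂) m₃ μ) :
    μ[f | m₂ ⊔ m₃] =ᵐ[μ] μ[f | m₂] := by
  have h23 : m₂ ⊔ m₃ ≤ m := sup_le h₂ h₃
  symm
  refine ae_eq_condExp_of_forall_setIntegral_eq h23 hfi
    (fun s _ _ => integrable_condExp.integrableOn) ?_
    ((stronglyMeasurable_condExp (m := m₂) (f := f) (μ := μ)).mono
      (le_sup_left : m₂ ≤ m₂ ⊔ m₃)).aestronglyMeasurable
  intro s hs _
  set D : Ω → ℝ := f - μ[f | m₂] with hD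
  have hDi : Integrable D μ := hfi.sub integrable_condExp
  have hDm : StronglyMeasurable[m₁ ⊔ m₂] D :=
    (hf.mono (le_sup_left : m₁ ≤ m₁ ⊔ m₂)).sub
      ((stronglyMeasurable_condExp (m := m₂) (f := f) (μ := μ)).mono
        (le_sup_right : m₂ ≤ m₁ ⊔ m₂))
  have hDA : ∀ A, MeasurableSet[m₂] A → ∫ x in A, D x ∂μ = 0 := by
    intro A hA
    have := setIntegral_condExp h₂ hfi hA
    rw [hD]
    simp only [Pi.sub_apply]
    rw [integral_sub hfi.integrableOn integrable_condExp.integrableOn, this, sub_self]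
  -- `1_A D` is independent of `B`, so its integral over `B` is a multiple of `∫_A D = 0`.
  have hrect : ∀ A B, MeasurableSet[m₂] A → MeasurableSet[m₃] B →
      ∫ x in A ∩ B, D x ∂μ = 0 := by
    intro A B hA hB
    have hA' : MeasurableSet[m₁ ⊔ m₂] A := (le_sup_right : m₂ ≤ m₁ ⊔ m₂) A hA
    have e := condExp_indep_eq (sup_le h₁ h₂) h₃ (hDm.indicator hA') hind
    have hI : Integrable (A.indicator D) μ := hDi.indicator (h₂ A hA)
    have e2 := setIntegral_condExp h₃ hI hB
    rw [setIntegral_indicator (h₂ A hA), inter_comm] at e2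
    rw [← e2, setIntegral_congr_ae (g := fun _ => ∫ x, A.indicator D x ∂μ) (h₃ B hB)
      (e.mono fun x hx _ => hx), integral_indicator (h₂ A hA), hDA A hA]
    simp
  have htot : ∫ x, D x ∂μ = 0 := by
    simpa using hDA univ MeasurableSet.univ
  have key : ∫ x in s, D x ∂μ = 0 := by
    have hgen : m₂ ⊔ m₃ = MeasurableSpace.generateFrom
        {s | ∃ A B, MeasurableSet[m₂] A ∧ MeasurableSet[m₃] B ∧ s = A ∩ B} := by
      apply le_antisymm
      · refine sup_le (fun A hA => ?_) (fun B hB => ?_)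
        · exact MeasurableSpace.measurableSet_generateFrom
            ⟨A, univ, hA, MeasurableSet.univ, by simp⟩
        · exact MeasurableSpace.measurableSet_generateFrom
            ⟨univ, B, MeasurableSet.univ, hB, by simp⟩
      · refine MeasurableSpace.generateFrom_le ?_
        rintro _ ⟨A, B, hA, hB, rfl⟩
        exact MeasurableSet.inter ((le_sup_left : m₂ ≤ m₂ ⊔ m₃) A hA)
          ((le_sup_right : m₃ ≤ m₂ ⊔ m₃) B hB)
    have hpi : IsPiSystem {s | ∃ A B, MeasurableSet[m₂] A ∧ MeasurableSet[m₃] B ∧ s = A ∩ B} := by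
      rintro _ ⟨A, B, hA, hB, rfl⟩ _ ⟨A', B', hA', hB', rfl⟩ _
      exact ⟨A ∩ A', B ∩ B', hA.inter hA', hB.inter hB', inter_inter_inter_comm _ _ _ _⟩
    induction s, hs using MeasurableSpace.induction_on_inter hgen hpi with
    | empty => simp
    | basic t ht => obtain ⟨A, B, hA, hB, rfl⟩ := ht; exact hrect A B hA hB
    | compl t ht ih =>
      have := integral_add_compl (h23 t ht) hDi
      linarith [ih (measure_lt_top _ _)]
    | iUnion g hd hg ih =>
      rw [integral_iUnion (fun i => h23 _ (hg i)) hd hDi.integrableOn]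
      simp [fun i => ih i (measure_lt_top _ _)]
  rw [hD] at key
  simp only [Pi.sub_apply] at key
  rw [integral_sub hfi.integrableOn integrable_condExp.integrableOn] at key
  linarith

/-- If the `M i` are independent and each `M i` contains an independent pair `a i`, `b i`, then the
joins of the `a i` and of the `b i` are independent. -/
lemma indep_iSup_of_iIndep {Ω ι : Type*} [Fintype ι] {m : MeasurableSpace Ω} {μ : Measure Ω}
    [IsProbabilityMeasure μ] {M a b : ι → MeasurableSpace Ω} (hM : iIndep M μ)
    (hMm : ∀ i, M i ≤ m) (ha : ∀ i, a i ≤ M i) (hb : ∀ i, b i ≤ M i)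
    (hab : ∀ i, Indep (a i) (b i) μ) : Indep (⨆ i, a i) (⨆ i, b i) μ := by
  have hmem : ∀ c : ι → MeasurableSpace Ω, ∀ s ∈ piiUnionInter
      (fun i => {s | MeasurableSet[c i] s}) univ,
      ∃ f : ι → Set Ω, (∀ i, MeasurableSet[c i] (f i)) ∧ s = ⋂ i, f i := by
    rintro c _ ⟨t, -, f, hf, rfl⟩
    refine ⟨fun i => if i ∈ t then f i else univ, fun i => ?_, ?_⟩
    · by_cases hi : i ∈ t
      · simpa [hi] using hf i hi
      · simp [hi]
    · ext x
      simp only [mem_iInter]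
      refine forall_congr' fun i => ?_
      by_cases hi : i ∈ t <;> simp [hi]
  have hgen : ∀ c : ι → MeasurableSpace Ω, (⨆ i, c i) = MeasurableSpace.generateFrom
      (piiUnionInter (fun i => {s | MeasurableSet[c i] s}) univ) := by
    intro c
    refine Eq.trans ?_ (generateFrom_piiUnionInter_measurableSet c univ).symm
    simp
  refine IndepSets.indep (iSup_le fun i => (ha i).trans (hMm i))
    (iSup_le fun i => (hb i).trans (hMm i))
    (isPiSystem_piiUnionInter _ (fun i => @MeasurableSpace.isPiSystem_measurableSet Ω (a i)) univ)
    (isPiSystem_piiUnionInter _ (fun i => @MeasurableSpace.isPiSystem_measurableSet Ω (b i)) univ)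
    (hgen a) (hgen b) ?_
  rw [IndepSets_iff]
  intro s s' hs hs'
  obtain ⟨f, hf, rfl⟩ := hmem a s hs
  obtain ⟨g, hg, rfl⟩ := hmem b s' hs'
  have hf' := fun i => ha i _ (hf i)
  have hg' := fun i => hb i _ (hg i)
  rw [← iInter_inter_distrib, hM.meas_iInter hf', hM.meas_iInter hg',
    hM.meas_iInter (fun i => (hf' i).inter (hg' i)), ← Finset.prod_mul_distrib]
  exact Finset.prod_congr rfl fun i _ => (Indep_iff _ _ _).1 (hab i) _ _ (hf i) (hg i)

/-- A linear functional of the vector is a linear combination of bridge values, hence Gaussian by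
definition of the bridge. -/
lemma bridge_hasGaussianLaw {Ω : Type*} [MeasurableSpace Ω] {P : Measure Ω}
    {β : ℝ → Ω → ℝ} (hβ : IsStdBrownianBridge P β) {k : ℕ} (t : Fin k → ℝ)
    (ht : ∀ i, t i ∈ Set.Icc (0 : ℝ) 1) : HasGaussianLaw (fun ω i => β (t i) ω) P where
  isGaussian_map := by
    have hm : Measurable (fun ω i => β (t i) ω) := measurable_pi_lambda _ fun i => hβ.1 (t i)
    refine isGaussian_of_map_eq_gaussianReal fun L => ⟨0, Real.toNNReal (∑ i, ∑ j,
      L (Pi.single i 1) * L (Pi.single j 1) * (min (t i) (t j) - t i * t j)), ?_⟩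
    rw [Measure.map_map (by fun_prop) hm]
    refine Eq.trans ?_ (hβ.2.2 k t ht fun i => L (Pi.single i 1))
    congr 1
    ext ω
    have : (fun i => β (t i) ω) = ∑ i, β (t i) ω • (Pi.single i (1 : ℝ) : Fin k → ℝ) := by
      ext j
      simp [Finset.sum_apply, Pi.single_apply]
    rw [Function.comp_apply, this, map_sum]
    simp [mul_comm]

lemma bridge_memLp {Ω : Type*} [MeasurableSpace Ω] {P : Measure Ω}
    {β : ℝ → Ω → ℝ} (hβ : IsStdBrownianBridge P β) {s : ℝ} (hs : s ∈ Set.Icc (0 : ℝ) 1) :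
    MemLp (β s) 2 P :=
  (HasGaussianLaw.eval (bridge_hasGaussianLaw hβ (fun _ : Fin 1 => s) fun _ => hs) 0).memLp_two

/-- The definition of a bridge prescribes variances of linear combinations; the covariances follow
by polarization. -/
lemma bridge_covariance {Ω : Type*} [MeasurableSpace Ω] {P : Measure Ω} [IsProbabilityMeasure P]
    {β : ℝ → Ω → ℝ} (hβ : IsStdBrownianBridge P β) {s u : ℝ} (hs : s ∈ Set.Icc (0 : ℝ) 1)
    (hu : u ∈ Set.Icc (0 : ℝ) 1) (hsu : s ≤ u) : cov[β s, β u; P] = s - s * u := by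
  have hvar : ∀ r ∈ Set.Icc (0 : ℝ) 1, Var[β r; P] = r - r * r := by
    intro r hr
    have h := hβ.2.2 1 (fun _ => r) (fun _ => hr) (fun _ => 1)
    simp only [Finset.univ_unique, Finset.sum_singleton, one_mul, min_self] at h
    have h2 := variance_id_map (hβ.1 r).aemeasurable (μ := P)
    rw [show (fun ω => β r ω) = β r from rfl] at h
    rw [h, variance_id_gaussianReal] at h2
    rw [← h2, Real.coe_toNNReal]
    nlinarith [hr.1, hr.2]
  have h := hβ.2.2 2 ![s, u] (by intro i; fin_cases i <;> simpa) (fun _ => 1)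
  simp only [Fin.sum_univ_two, one_mul, Matrix.cons_val_zero, Matrix.cons_val_one, min_self,
    min_eq_left hsu, min_eq_right hsu] at h
  have h2 := variance_id_map ((hβ.1 s).add (hβ.1 u)).aemeasurable (μ := P)
  rw [show (fun ω => β s ω + β u ω) = β s + β u from rfl] at h
  rw [h, variance_id_gaussianReal, variance_add (bridge_memLp hβ hs) (bridge_memLp hβ hu),
    hvar s hs, hvar u hu, Real.coe_toNNReal] at h2
  · linarith
  · nlinarith [hs.1, hs.2, hu.1, hu.2, mul_nonneg hs.1 (sub_nonneg.2 hu.2)]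

/-- The residuals of finitely many bridge values, after linear regression on the value at
the latest time `t l`, are jointly independent of that value. -/
lemma bridge_residual_indepFun {Ω : Type*} [MeasurableSpace Ω] {P : Measure Ω}
    [IsProbabilityMeasure P] {β : ℝ → Ω → ℝ} (hβ : IsStdBrownianBridge P β) {k : ℕ}
    (t : Fin k → ℝ) (l : Fin k) (htl : ∀ j, t j ≤ t l) (ht : ∀ j, t j ∈ Set.Ioo (0 : ℝ) 1) :
    IndepFun (β (t l)) (fun ω j => β (t j) ω - t j / t l * β (t l) ω) P := by
  have ht' : ∀ j, t j ∈ Set.Icc (0 : ℝ) 1 := fun j => Ioo_subset_Icc_self (ht j)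
  -- The pair is a linear image of the Gaussian vector of bridge values, hence jointly Gaussian.
  let L : (Fin k → ℝ) →L[ℝ] (Unit → ℝ) × (Fin k → ℝ) :=
    (ContinuousLinearMap.pi fun _ => ContinuousLinearMap.proj l).prod
      (ContinuousLinearMap.pi fun j =>
        ContinuousLinearMap.proj j - (t j / t l) • ContinuousLinearMap.proj l)
  have hG : HasGaussianLaw (fun ω => ((fun _ : Unit => β (t l) ω),
      (fun j => β (t j) ω - t j / t l * β (t l) ω))) P :=
    (bridge_hasGaussianLaw hβ t ht').map_fun L
  have hI := HasGaussianLaw.indepFun_of_covariance_eval (X := fun _ : Unit => β (t l))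
    (Y := fun j ω => β (t j) ω - t j / t l * β (t l) ω) hG ?_
  · exact hI.comp (φ := fun x : Unit → ℝ => x ()) (ψ := id) (by fun_prop) measurable_id
  · intro _ j
    have e := covariance_sub_right (bridge_memLp hβ (ht' l)) (bridge_memLp hβ (ht' j))
      ((bridge_memLp hβ (ht' l)).const_smul (t j / t l))
    rw [covariance_smul_right, covariance_comm (β (t l)) (β (t j)), bridge_covariance hβ (ht' j) (ht' l) (htl j),
      bridge_covariance hβ (ht' l) (ht' l) le_rfl] at e
    refine Eq.trans e ?_
    have := (ht l).1.ne'
    field_simp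
    ring

/-- Lemma 2.2, part 1.
The conditional law of `X` given all past observations of every coordinate depends only on the
most recent observation of each coordinate: conditioning on
`σ(ξ⁽ⁱ⁾_{t_{i,j}} : i, j)` equals conditioning on `σ(ξ⁽ⁱ⁾_{t_{i,kᵢ}} : i)`. -/
theorem markov_property_most_recent_observation
    {Ω : Type*} [m0 : MeasurableSpace Ω] (P : Measure Ω) [IsProbabilityMeasure P]
    (n : ℕ) (X : Ω → ℝ) (hX : Measurable X)
    (ν : Measure ℝ) [IsProbabilityMeasure ν] (hlaw : Measure.map X P = ν)
    (hν : FiniteExpMoments ν)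
    (β : Fin n → ℝ → Ω → ℝ) (hβ : ∀ i, IsStdBrownianBridge P (β i))
    (hindep : iIndep (fun j : Option (Fin n) =>
        Option.rec (MeasurableSpace.comap X inferInstance)
          (fun i => sigmaUpTo (β i) 1) j) P)
    (σ : Fin n → ℝ) (hσ : ∀ i, 0 < σ i)
    (ξ : Fin n → ℝ → Ω → ℝ) (hξ : ∀ i s ω, ξ i s ω = s * X ω + σ i * β i s ω)
    (k : Fin n → ℕ) (t : (i : Fin n) → Fin (k i + 1) → ℝ)
    (htmono : ∀ i, StrictMono (t i))
    (ht : ∀ i j, t i j ∈ Set.Ioo (0:ℝ) 1)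
    (φ : ℝ → ℝ) (hφm : Measurable φ) (C : ℝ) (hφb : ∀ x, |φ x| ≤ C) :
    P[fun ω => φ (X ω) |
        ⨆ i, ⨆ j, MeasurableSpace.comap (fun ω => ξ i (t i j) ω) inferInstance]
      =ᵐ[P]
    P[fun ω => φ (X ω) |
        ⨆ i, MeasurableSpace.comap (fun ω => ξ i (t i (Fin.last (k i))) ω) inferInstance] := by
  -- `u i` is the most recent time of coordinate `i`, and `R i` its vector of residuals.
  set u : Fin n → ℝ := fun i => t i (Fin.last (k i)) with hu
  let R : (i : Fin n) → Ω → Fin (k i + 1) → ℝ :=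
    fun i ω j => β i (t i j) ω - t i j / u i * β i (u i) ω
  have hu0 : ∀ i, u i ≠ 0 := fun i => (ht i _).1.ne'
  have hβm : ∀ i s, Measurable (β i s) := fun i => (hβ i).1
  have hRm : ∀ i, Measurable (R i) := fun i =>
    measurable_pi_lambda _ fun j => (hβm i _).sub ((hβm i _).const_mul _)
  have hξm : ∀ i s, Measurable (ξ i s) := fun i s => by
    rw [show ξ i s = fun ω => s * X ω + σ i * β i s ω from funext (hξ i s)]
    exact (hX.const_mul _).add ((hβm i s).const_mul _)
  -- `X` cancels in `ξ_s - (s/u) ξ_u`.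
  have hres : ∀ i j ω, ξ i (t i j) ω = t i j / u i * ξ i (u i) ω + σ i * R i ω j := by
    intro i j ω
    have := hu0 i
    simp only [R, hξ]
    field_simp
    ring
  have hbridge : ∀ i, IndepFun (β i (u i)) (R i) P := fun i =>
    bridge_residual_indepFun (hβ i) (t i) (Fin.last (k i))
      (fun j => (htmono i).monotone (Fin.le_last j)) (ht i)
  set G : MeasurableSpace Ω := ⨆ i, MeasurableSpace.comap (ξ i (u i)) inferInstance with hG
  set H : MeasurableSpace Ω := ⨆ i, MeasurableSpace.comap (R i) inferInstance with hH
  have hGm : G ≤ m0 := iSup_le fun i => (hξm i _).comap_le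
  have hHm : H ≤ m0 := iSup_le fun i => (hRm i).comap_le
  have hξG : ∀ i, Measurable[G] (ξ i (u i)) := fun i =>
    (comap_measurable (ξ i (u i))).mono
      (le_iSup (fun i => MeasurableSpace.comap (ξ i (u i)) inferInstance) i) le_rfl
  have hRH : ∀ i, Measurable[H] (R i) := fun i =>
    (comap_measurable (R i)).mono
      (le_iSup (fun i => MeasurableSpace.comap (R i) inferInstance) i) le_rfl
  have hF : (⨆ i, ⨆ j, MeasurableSpace.comap (fun ω => ξ i (t i j) ω) inferInstance) = G ⊔ H := by
    apply le_antisymm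
    · refine iSup_le fun i => iSup_le fun j => Measurable.comap_le ?_
      rw [show (fun ω => ξ i (t i j) ω) = fun ω => t i j / u i * ξ i (u i) ω + σ i * R i ω j from
        funext (hres i j)]
      have h1 : Measurable[G ⊔ H] (ξ i (u i)) := (hξG i).mono le_sup_left le_rfl
      have hR : Measurable[G ⊔ H] (R i) := (hRH i).mono (le_sup_right : H ≤ G ⊔ H) le_rfl
      have h2 : Measurable[G ⊔ H] (fun ω => R i ω j) := (measurable_pi_apply j).comp hR
      exact (h1.const_mul _).add (h2.const_mul _)
    · set F : MeasurableSpace Ω :=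
        ⨆ i, ⨆ j, MeasurableSpace.comap (fun ω => ξ i (t i j) ω) inferInstance
      have hξF : ∀ i j, Measurable[F] (ξ i (t i j)) := fun i j =>
        (comap_measurable (ξ i (t i j))).mono
          ((le_iSup (fun j => MeasurableSpace.comap (fun ω => ξ i (t i j) ω) inferInstance) j).trans
            (le_iSup (fun i => ⨆ j,
              MeasurableSpace.comap (fun ω => ξ i (t i j) ω) inferInstance) i)) le_rfl
      refine sup_le (iSup_le fun i => (hξF i _).comap_le) (iSup_le fun i => ?_)
      refine Measurable.comap_le (measurable_pi_lambda _ fun j => ?_)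
      have : (fun ω => R i ω j) =
          fun ω => (σ i)⁻¹ * (ξ i (t i j) ω - t i j / u i * ξ i (u i) ω) := by
        ext ω
        rw [hres i j ω]
        have := (hσ i).ne'
        field_simp
        ring
      rw [this]
      exact ((hξF i j).sub ((hξF i _).const_mul _)).const_mul _
  have hcomap : ∀ i, ∀ s ∈ Set.Icc (0 : ℝ) 1, Measurable[sigmaUpTo (β i) 1] (β i s) :=
    fun i s hs => (comap_measurable (β i s)).mono
      (le_iSup₂ (f := fun s (_ : s ∈ Set.Icc (0 : ℝ) 1) =>
        MeasurableSpace.comap (β i s) inferInstance) s hs) le_rfl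
  have htI : ∀ i j, t i j ∈ Set.Icc (0 : ℝ) 1 := fun i j => Ioo_subset_Icc_self (ht i j)
  -- Each independent block splits into a part `a` kept in the conditioning and a part `b` of pure
  -- noise; the block of `X` has no noise part.
  let a : Option (Fin n) → MeasurableSpace Ω := fun o => match o with
    | none => MeasurableSpace.comap X inferInstance
    | some i => MeasurableSpace.comap (β i (u i)) inferInstance
  let b : Option (Fin n) → MeasurableSpace Ω := fun o => match o with
    | none => ⊥
    | some i => MeasurableSpace.comap (R i) inferInstance
  have hAB : Indep (⨆ o, a o) (⨆ o, b o) P := by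
    refine indep_iSup_of_iIndep hindep ?_ ?_ ?_ ?_
    · rintro (_ | i)
      · exact hX.comap_le
      · exact iSup₂_le fun s _ => (hβm i s).comap_le
    · rintro (_ | i)
      · exact le_rfl
      · exact Measurable.comap_le (m₁ := sigmaUpTo (β i) 1) (hcomap i _ (htI i _))
    · rintro (_ | i)
      · exact bot_le
      · refine Measurable.comap_le (m₁ := sigmaUpTo (β i) 1)
          (@measurable_pi_lambda _ _ _ (sigmaUpTo (β i) 1) _ _ fun j => ?_)
        exact (hcomap i _ (htI i j)).sub ((hcomap i _ (htI i _)).const_mul _)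
    · rintro (_ | i)
      · exact @indep_bot_right Ω (MeasurableSpace.comap X inferInstance) m0 P _
      · exact hbridge i
  have hXA : Measurable[⨆ o, a o] X :=
    (comap_measurable X).mono (le_iSup a none) le_rfl
  have hβA : ∀ i, Measurable[⨆ o, a o] (β i (u i)) := fun i =>
    (comap_measurable (β i (u i))).mono (le_iSup a (some i)) le_rfl
  have hind : Indep (MeasurableSpace.comap X inferInstance ⊔ G) H P := by
    refine indep_of_indep_of_le_left (indep_of_indep_of_le_right hAB ?_) ?_
    · exact iSup_le fun i => le_iSup b (some i)
    · refine sup_le hXA.comap_le (iSup_le fun i => Measurable.comap_le ?_)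
      rw [show ξ i (u i) = fun ω => u i * X ω + σ i * β i (u i) ω from funext (hξ i (u i))]
      exact (hXA.const_mul _).add ((hβA i).const_mul _)
  rw [hF]
  exact condExp_sup_of_indep hX.comap_le hGm hHm
    (hφm.comp (comap_measurable X)).stronglyMeasurable
    (Integrable.of_bound (hφm.comp hX).aestronglyMeasurable C
      (Eventually.of_forall fun ω => hφb (X ω))) hind

end
end

section
/- Let ν be a compactly supported probability measure on ℝ, let σ > 0 and let ψ : [0,1] → ℝ be continuous and φ : ℝ → ℝ be bounded measurable. Define, for (z,t) ∈ ℝ × [0,1), v(z,t) = exp(−∫_t^1 ψ(s) ds) · (∫ φ(x) h(x,z,t,σ) ν(dx)) / (∫ h(x,z,t,σ) ν(dx)) and μ(z,t) = ((∫ x·h(x,z,t,σ) ν(dx)) / (∫ h(x,z,t,σ) ν(dx)) − z)/(1−t). Then v is twice continuously differentiable in z and continuously differentiable in t on ℝ × (0,1), and satisfies the partial differential equation ∂v/∂t + μ(z,t)·∂v/∂z + (σ²/2)·∂²v/∂z² − ψ(t)·v = 0 for all (z,t) ∈ ℝ × (0,1). (Proposition 2.13, part 2: the Feynman–Kac equation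 when no information source is ever deactivated, so that the jump intensity term vanishes.) -/
/-!
Write `a = 1 / (σ² (1 - t))`. The likelihood `h = exp (a z x - a t x² / 2)` is a smooth function of
the natural parameters `(a z, a t)`, and since `ν` has compact support every moment
`∫ g(x) xᵏ h ν(dx)` with `g` bounded may be differentiated under the integral sign
(`hasFDerivAt_expInt`). Hence the moments are jointly continuous, differentiation in `z` raises `k`
by one (`hasDerivAt_hMoment_space`), and the time derivative is a combination of the moments of
order `k + 1` and `k + 2` (`hasDerivAt_hMoment_time`). In particular each moment `F` solves the
linear equation `F_t - z / (1 - t) F_z + σ² / 2 F_zz = 0`.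

With `N = ∫ φ h ν(dx)` and `Z = ∫ h ν(dx) > 0`, the quotient `u = N / Z` therefore solves
`u_t + (σ² Z_z / Z - z / (1 - t)) u_z + σ² / 2 u_zz = 0`, and `σ² Z_z / Z` is the conditional mean
`(∫ x h ν(dx)) / Z` divided by `1 - t`, so that the bracket is the drift `μ`. The discount factor
`exp (-∫ₜ¹ ψ)` contributes the term `ψ v` (`hasDerivAt_discount`). Since `h` is positive, `Z` never
vanishes, and the partial derivatives of `v` are explicit rational expressions in the moments, which
gives their continuity.
-/


open MeasureTheory ProbabilityTheory Real Set Filter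
open scoped ENNReal NNReal Classical

noncomputable section

/-- In the natural parameters `(a, b)` of the exponential family `exp (a x - b x² / 2)`, the
integral of a bounded weight is Fréchet differentiable: differentiation under the integral sign is
dominated because `x` ranges over a bounded set. -/
lemma hasFDerivAt_expInt {ν : Measure ℝ} [IsProbabilityMeasure ν] {R : ℝ}
    (hR : ∀ᵐ x ∂ν, |x| ≤ R) {g : ℝ → ℝ} (hg : Measurable g) {C : ℝ}
    (hC : ∀ᵐ x ∂ν, |g x| ≤ C) (p : ℝ × ℝ) :
    HasFDerivAt (fun q : ℝ × ℝ => ∫ x, g x * Real.exp (q.1 * x - q.2 * (x ^ 2 / 2)) ∂ν)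
      ((∫ x, g x * x * Real.exp (p.1 * x - p.2 * (x ^ 2 / 2)) ∂ν) • ContinuousLinearMap.fst ℝ ℝ ℝ
        - ((∫ x, g x * x ^ 2 * Real.exp (p.1 * x - p.2 * (x ^ 2 / 2)) ∂ν) / 2) •
          ContinuousLinearMap.snd ℝ ℝ ℝ) p := by
  set B : ℝ := Real.exp ((|p.1| + 1) * R + (|p.2| + 1) * (R ^ 2 / 2)) with hB
  have hexp : ∀ q ∈ Metric.ball p 1, ∀ x : ℝ, |x| ≤ R →
      Real.exp (q.1 * x - q.2 * (x ^ 2 / 2)) ≤ B := by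
    intro q hq x hx
    have hx2 : x ^ 2 ≤ R ^ 2 := by
      rw [← sq_abs x]; gcongr
    have hd := Metric.mem_ball.1 hq
    rw [Prod.dist_eq, max_lt_iff, Real.dist_eq, Real.dist_eq] at hd
    have h1 : |q.1| ≤ |p.1| + 1 := by
      have := abs_sub_abs_le_abs_sub q.1 p.1
      linarith [hd.1]
    have h2 : |q.2| ≤ |p.2| + 1 := by
      have := abs_sub_abs_le_abs_sub q.2 p.2
      linarith [hd.2]
    have e1 : q.1 * x ≤ (|p.1| + 1) * R :=
      (le_abs_self _).trans (by rw [abs_mul]; gcongr)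
    have e2 : -(q.2 * (x ^ 2 / 2)) ≤ (|p.2| + 1) * (R ^ 2 / 2) :=
      (neg_le_abs _).trans (by
        rw [abs_mul, abs_of_nonneg (by positivity : 0 ≤ x ^ 2 / 2)]; gcongr)
    exact Real.exp_le_exp.2 (by linarith)
  have hint : ∀ k : ℕ, Integrable
      (fun x => g x * x ^ k * Real.exp (p.1 * x - p.2 * (x ^ 2 / 2))) ν := by
    intro k
    refine Integrable.of_bound (C := C * R ^ k * B) (by fun_prop) ?_
    filter_upwards [hR, hC] with x hx hgx
    have hC0 : 0 ≤ C := (abs_nonneg _).trans hgx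
    have hR0 : 0 ≤ R := (abs_nonneg _).trans hx
    rw [norm_mul, norm_mul, norm_pow, Real.norm_eq_abs, Real.norm_eq_abs, Real.norm_eq_abs,
      Real.abs_exp]
    have := hexp p (Metric.mem_ball_self one_pos) x hx
    gcongr
  have key := hasFDerivAt_integral_of_dominated_of_fderiv_le (𝕜 := ℝ) (μ := ν) (x₀ := p)
    (F := fun (q : ℝ × ℝ) x => g x * Real.exp (q.1 * x - q.2 * (x ^ 2 / 2)))
    (F' := fun (q : ℝ × ℝ) x => (g x * x * Real.exp (q.1 * x - q.2 * (x ^ 2 / 2))) •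
        ContinuousLinearMap.fst ℝ ℝ ℝ
      - (g x * x ^ 2 * Real.exp (q.1 * x - q.2 * (x ^ 2 / 2)) / 2) • ContinuousLinearMap.snd ℝ ℝ ℝ)
    (bound := fun _ => C * R * B + C * R ^ 2 * B / 2)
    (Metric.ball_mem_nhds p one_pos)
    (Eventually.of_forall fun q => by fun_prop)
    (by simpa using hint 0) (by
      refine AEStronglyMeasurable.sub ?_ ?_ <;>
      exact AEStronglyMeasurable.smul_const (by fun_prop) _)
    (by
      filter_upwards [hR, hC] with x hx hgx q hq
      have hC0 : 0 ≤ C := (abs_nonneg _).trans hgx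
      have hR0 : 0 ≤ R := (abs_nonneg _).trans hx
      have hE := hexp q hq x hx
      refine (norm_sub_le _ _).trans (add_le_add ?_ ?_)
      · rw [norm_smul, norm_mul, norm_mul, Real.norm_eq_abs, Real.norm_eq_abs, Real.norm_eq_abs,
          Real.abs_exp]
        refine (mul_le_of_le_one_right (by positivity)
          (ContinuousLinearMap.norm_fst_le ℝ ℝ ℝ)).trans ?_
        gcongr
      · rw [norm_smul, norm_div, norm_mul, norm_mul, norm_pow, Real.norm_eq_abs, Real.norm_eq_abs,
          Real.norm_eq_abs, Real.abs_exp, Real.norm_ofNat]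
        refine (mul_le_of_le_one_right (by positivity)
          (ContinuousLinearMap.norm_snd_le ℝ ℝ ℝ)).trans ?_
        gcongr)
    (integrable_const _)
    (Eventually.of_forall fun x q _ => by
      have h1 : HasFDerivAt (fun q : ℝ × ℝ => q.1 * x - q.2 * (x ^ 2 / 2))
          (x • ContinuousLinearMap.fst ℝ ℝ ℝ - (x ^ 2 / 2) • ContinuousLinearMap.snd ℝ ℝ ℝ) q :=
        (hasFDerivAt_fst.mul_const x).sub (hasFDerivAt_snd.mul_const (x ^ 2 / 2))
      refine (h1.exp.const_mul (g x)).congr_fderiv ?_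
      ext <;> simp <;> ring)
  refine key.congr_fderiv ?_
  have i1 := hint 1
  simp only [pow_one] at i1
  rw [integral_sub (i1.smul_const _) (((hint 2).div_const 2).smul_const _),
    integral_smul_const, integral_smul_const, integral_div]

/-- The unnormalized moment `∫ g(x) xᵏ h(x,z,t,σ) ν(dx)`. -/
def hMoment (ν : Measure ℝ) (σ : ℝ) (g : ℝ → ℝ) (k : ℕ) (z t : ℝ) : ℝ :=
  ∫ x, g x * x ^ k * hfun x z t σ ∂ν

lemma hMoment_eq (ν : Measure ℝ) (σ : ℝ) (g : ℝ → ℝ) (k : ℕ) (z t : ℝ) :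
    hMoment ν σ g k z t = ∫ x, g x * x ^ k *
      Real.exp (z / (σ ^ 2 * (1 - t)) * x - t / (σ ^ 2 * (1 - t)) * (x ^ 2 / 2)) ∂ν := by
  unfold hMoment hfun
  congr! 4 with x
  ring

section Moments

variable {ν : Measure ℝ} [IsProbabilityMeasure ν] {R : ℝ} (hR : ∀ᵐ x ∂ν, |x| ≤ R)
  {g : ℝ → ℝ} (hg : Measurable g) {C : ℝ} (hC : ∀ x, |g x| ≤ C) {σ : ℝ} (hσ : 0 < σ)

include hR hg hC

lemma hasFDerivAt_expInt_pow (k : ℕ) (p : ℝ × ℝ) :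
    HasFDerivAt (fun q : ℝ × ℝ => ∫ x, g x * x ^ k * Real.exp (q.1 * x - q.2 * (x ^ 2 / 2)) ∂ν)
      ((∫ x, g x * x ^ (k + 1) * Real.exp (p.1 * x - p.2 * (x ^ 2 / 2)) ∂ν) •
          ContinuousLinearMap.fst ℝ ℝ ℝ
        - ((∫ x, g x * x ^ (k + 2) * Real.exp (p.1 * x - p.2 * (x ^ 2 / 2)) ∂ν) / 2) •
          ContinuousLinearMap.snd ℝ ℝ ℝ) p := by
  have h := hasFDerivAt_expInt hR (g := fun x => g x * x ^ k) (by fun_prop) (C := C * R ^ k) (by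
    filter_upwards [hR] with x hx
    have hC0 : 0 ≤ C := (abs_nonneg _).trans (hC x)
    have hR0 : 0 ≤ R := (abs_nonneg _).trans hx
    rw [abs_mul, abs_pow]
    have := hC x
    gcongr) p
  simpa only [mul_assoc, ← pow_succ, ← pow_add] using h

/-- No restriction on `t` is needed: at `t = 1` division by zero makes `h` constant and the right-hand
side `0`. -/
lemma hasDerivAt_hMoment_space (k : ℕ) (z t : ℝ) :
    HasDerivAt (fun z' => hMoment ν σ g k z' t)
      (hMoment ν σ g (k + 1) z t / (σ ^ 2 * (1 - t))) z := by
  have hγ : HasDerivAt (fun z' : ℝ => (z' / (σ ^ 2 * (1 - t)), t / (σ ^ 2 * (1 - t))))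
      (1 / (σ ^ 2 * (1 - t)), 0) z :=
    ((hasDerivAt_id z).div_const _).prodMk (hasDerivAt_const _ _)
  have h := (hasFDerivAt_expInt_pow hR hg hC k _).comp_hasDerivAt z hγ
  simp only [hMoment_eq]
  refine h.congr_deriv ?_
  simp [div_eq_mul_inv]

include hσ

lemma hasDerivAt_hMoment_time (k : ℕ) (z : ℝ) {t : ℝ} (ht : t < 1) :
    HasDerivAt (fun t' => hMoment ν σ g k z t')
      ((z * hMoment ν σ g (k + 1) z t - hMoment ν σ g (k + 2) z t / 2) /
        (σ ^ 2 * (1 - t) ^ 2)) t := by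
  have h1 : 1 - t ≠ 0 := by linarith
  have hd : HasDerivAt (fun t' : ℝ => σ ^ 2 * (1 - t')) (σ ^ 2 * (-1)) t :=
    ((hasDerivAt_id t).const_sub 1).const_mul _
  have hne : σ ^ 2 * (1 - t) ≠ 0 := by positivity
  have hγ := ((hasDerivAt_const t z).div hd hne).prodMk ((hasDerivAt_id t).div hd hne)
  have h := (hasFDerivAt_expInt_pow hR hg hC k _).comp_hasDerivAt t hγ
  simp only [hMoment_eq]
  refine h.congr_deriv ?_
  simp
  field_simp
  ring

lemma continuousAt_hMoment (k : ℕ) (z : ℝ) {t : ℝ} (ht : t < 1) :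
    ContinuousAt (fun p : ℝ × ℝ => hMoment ν σ g k p.1 p.2) (z, t) := by
  have h1 : 1 - t ≠ 0 := by linarith
  have hne : σ ^ 2 * (1 - t) ≠ 0 := by positivity
  have hγ : ContinuousAt
      (fun p : ℝ × ℝ => (p.1 / (σ ^ 2 * (1 - p.2)), p.2 / (σ ^ 2 * (1 - p.2)))) (z, t) := by
    refine ContinuousAt.prodMk ?_ ?_ <;>
    exact ContinuousAt.div (by fun_prop) (by fun_prop) hne
  simp only [hMoment_eq]
  exact ContinuousAt.comp (x := (z, t))
    (g := fun q : ℝ × ℝ => ∫ x, g x * x ^ k * Real.exp (q.1 * x - q.2 * (x ^ 2 / 2)) ∂ν)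
    (hasFDerivAt_expInt_pow hR hg hC k _).continuousAt hγ

end Moments

lemma hMoment_one_pos {ν : Measure ℝ} [IsProbabilityMeasure ν] {R : ℝ} (hR : ∀ᵐ x ∂ν, |x| ≤ R)
    (σ z t : ℝ) : 0 < hMoment ν σ (fun _ => 1) 0 z t := by
  rw [hMoment_eq]
  simp only [pow_zero, mul_one, one_mul]
  refine integral_exp_pos (Integrable.of_bound (C := Real.exp
    (|z / (σ ^ 2 * (1 - t))| * R + |t / (σ ^ 2 * (1 - t))| * (R ^ 2 / 2))) (by fun_prop) ?_)
  filter_upwards [hR] with x hx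
  have hx2 : x ^ 2 ≤ R ^ 2 := by
    rw [← sq_abs x]; gcongr
  rw [Real.norm_eq_abs, Real.abs_exp, Real.exp_le_exp, sub_eq_add_neg]
  refine add_le_add ((le_abs_self _).trans (by rw [abs_mul]; gcongr)) ((neg_le_abs _).trans ?_)
  rw [abs_mul, abs_of_nonneg (by positivity : 0 ≤ x ^ 2 / 2)]
  gcongr

/-- The discount factor satisfies `∂ₜ exp(-∫ₜ¹ ψ) = ψ(t) exp(-∫ₜ¹ ψ)`. -/
lemma hasDerivAt_discount {ψ : ℝ → ℝ} (hψ : ContinuousOn ψ (Set.Icc 0 1)) {t : ℝ}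
    (ht : t ∈ Set.Ioo (0:ℝ) 1) :
    HasDerivAt (fun t' => Real.exp (-(∫ s in t'..(1:ℝ), ψ s)))
      (ψ t * Real.exp (-(∫ s in t..(1:ℝ), ψ s))) t := by
  have hi : IntervalIntegrable ψ volume t 1 := by
    refine ContinuousOn.intervalIntegrable (hψ.mono ?_)
    rw [Set.uIcc_of_le ht.2.le]
    exact Set.Icc_subset_Icc_left ht.1.le
  have hm := ContinuousOn.stronglyMeasurableAtFilter (μ := volume) isOpen_Ioo
    (hψ.mono Set.Ioo_subset_Icc_self) t ht
  have h := intervalIntegral.integral_hasDerivAt_left hi hm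
    (hψ.continuousAt (Icc_mem_nhds ht.1 ht.2))
  refine h.neg.exp.congr_deriv ?_
  rw [neg_neg, mul_comm, Pi.neg_apply]

/-- Proposition 2.13, part 2: Feynman–Kac equation without deactivation.
The function `v(z,t) = e^{−∫_t^1 ψ} (∫φ(x)h(x,z,t,σ)ν(dx))/(∫h(x,z,t,σ)ν(dx))` is twice
continuously differentiable in `z` and continuously differentiable in `t` on `ℝ × (0,1)`, and
satisfies `∂_t v + μ ∂_z v + (σ²/2) ∂_zz v − ψ v = 0` there, where
`μ(z,t) = ((∫x·h ν(dx))/(∫h ν(dx)) − z)/(1−t)`. -/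
theorem feynman_kac_no_deactivation
    (ν : Measure ℝ) [IsProbabilityMeasure ν]
    (hcs : ∃ K : Set ℝ, IsCompact K ∧ ν Kᶜ = 0)
    (σ : ℝ) (hσ : 0 < σ)
    (ψ : ℝ → ℝ) (hψ : ContinuousOn ψ (Set.Icc 0 1))
    (φ : ℝ → ℝ) (hφm : Measurable φ) (C : ℝ) (hφb : ∀ x, |φ x| ≤ C)
    (v : ℝ → ℝ → ℝ)
    (hv : ∀ z t, v z t = Real.exp (-(∫ s in t..(1:ℝ), ψ s)) *
        ((∫ x, φ x * hfun x z t σ ∂ν) / (∫ x, hfun x z t σ ∂ν)))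
    (μdrift : ℝ → ℝ → ℝ)
    (hμ : ∀ z t, μdrift z t
        = ((∫ x, x * hfun x z t σ ∂ν) / (∫ x, hfun x z t σ ∂ν) - z) / (1 - t)) :
    ∀ z : ℝ, ∀ t ∈ Set.Ioo (0:ℝ) 1,
      DifferentiableAt ℝ (fun t' => v z t') t ∧
      DifferentiableAt ℝ (fun z' => v z' t) z ∧
      DifferentiableAt ℝ (fun z' => deriv (fun z'' => v z'' t) z') z ∧
      ContinuousAt (fun p : ℝ × ℝ => deriv (fun t' => v p.1 t') p.2) (z, t) ∧
      ContinuousAt (fun p : ℝ × ℝ => deriv (fun z' => v z' p.2) p.1) (z, t) ∧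
      ContinuousAt (fun p : ℝ × ℝ => deriv (fun z' => deriv (fun z'' => v z'' p.2) z') p.1) (z, t) ∧
      deriv (fun t' => v z t') t
        + μdrift z t * deriv (fun z' => v z' t) z
        + σ ^ 2 / 2 * deriv (fun z' => deriv (fun z'' => v z'' t) z') z
        - ψ t * v z t = 0 := by
  obtain ⟨K, hK, hKν⟩ := hcs
  obtain ⟨R, hKR⟩ := hK.isBounded.exists_norm_le
  have hR : ∀ᵐ x ∂ν, |x| ≤ R := by
    filter_upwards [show ∀ᵐ x ∂ν, x ∈ K from hKν] with x hx using hKR x hx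
  have h1m : Measurable (fun _ : ℝ => (1:ℝ)) := measurable_const
  have h1b : ∀ x : ℝ, |(fun _ : ℝ => (1:ℝ)) x| ≤ 1 := by simp
  set E : ℝ → ℝ := fun t => Real.exp (-(∫ s in t..(1:ℝ), ψ s)) with hE
  set N : ℕ → ℝ → ℝ → ℝ := fun k => hMoment ν σ φ k with hN
  set Z : ℕ → ℝ → ℝ → ℝ := fun k => hMoment ν σ (fun _ => 1) k with hZ
  have hvN : ∀ z t, v z t = E t * (N 0 z t / Z 0 z t) := by
    intro z t
    rw [hv]
    simp [hE, hN, hZ, hMoment]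
  have hμZ : ∀ z t, μdrift z t = (Z 1 z t / Z 0 z t - z) / (1 - t) := by
    intro z t
    rw [hμ]
    simp [hZ, hMoment]
  have hZ0 : ∀ z t, Z 0 z t ≠ 0 := fun z t => (hMoment_one_pos hR σ z t).ne'
  have dNz := fun k z t => hasDerivAt_hMoment_space (σ := σ) hR hφm hφb k z t
  have dZz := fun k z t => hasDerivAt_hMoment_space (σ := σ) hR h1m h1b k z t
  have dNt := fun k z t (ht : t < 1) => hasDerivAt_hMoment_time hR hφm hφb hσ k z ht
  have dZt := fun k z t (ht : t < 1) => hasDerivAt_hMoment_time hR h1m h1b hσ k z ht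
  have cN := fun k z t (ht : t < 1) => continuousAt_hMoment hR hφm hφb hσ k z ht
  have cZ := fun k z t (ht : t < 1) => continuousAt_hMoment hR h1m h1b hσ k z ht
  -- Closed forms of the three partial derivatives of `v`; `N k` and `Z k` are the moments of order `k`
  -- with weights `φ` and `1`.
  set Vz : ℝ → ℝ → ℝ := fun z t => E t * ((N 1 z t * Z 0 z t - N 0 z t * Z 1 z t) /
    (Z 0 z t ^ 2 * (σ ^ 2 * (1 - t)))) with hVz
  set Vzz : ℝ → ℝ → ℝ := fun z t => E t *
    (((N 2 z t * Z 0 z t - N 0 z t * Z 2 z t) * Z 0 z t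
      - 2 * Z 1 z t * (N 1 z t * Z 0 z t - N 0 z t * Z 1 z t)) /
    (Z 0 z t ^ 3 * (σ ^ 2 * (1 - t)) ^ 2)) with hVzz
  set Vt : ℝ → ℝ → ℝ := fun z t => ψ t * E t * (N 0 z t / Z 0 z t) + E t *
    (((z * N 1 z t - N 2 z t / 2) * Z 0 z t - N 0 z t * (z * Z 1 z t - Z 2 z t / 2)) /
    (Z 0 z t ^ 2 * (σ ^ 2 * (1 - t) ^ 2))) with hVt
  have hne1 : ∀ t : ℝ, t < 1 → 1 - t ≠ 0 := fun t ht => by linarith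
  have hdz : ∀ z t, t < 1 → HasDerivAt (fun z' => v z' t) (Vz z t) z := by
    intro z t ht
    simp only [hvN]
    have h1 := hne1 t ht
    have h0 := hZ0 z t
    refine (((dNz 0 z t).div (dZz 0 z t) h0).const_mul (E t)).congr_deriv ?_
    change E t * ((N 1 z t / _ * Z 0 z t - N 0 z t * (Z 1 z t / _)) / Z 0 z t ^ 2) = _
    simp only [hVz]
    field_simp
  have hdzz : ∀ z t, t < 1 → HasDerivAt (fun z' => Vz z' t) (Vzz z t) z := by
    intro z t ht
    have h1 := hne1 t ht
    have h0 := hZ0 z t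
    have hden : Z 0 z t ^ 2 * (σ ^ 2 * (1 - t)) ≠ 0 := by positivity
    refine (((((dNz 1 z t).mul (dZz 0 z t)).sub ((dNz 0 z t).mul (dZz 1 z t))).div
      (((dZz 0 z t).pow 2).mul_const _) hden).const_mul (E t)).congr_deriv ?_
    change E t * (((N 2 z t / _ * Z 0 z t + N 1 z t * (Z 1 z t / _)
      - (N 1 z t / _ * Z 1 z t + N 0 z t * (Z 2 z t / _))) * (Z 0 z t ^ 2 * _)
      - (N 1 z t * Z 0 z t - N 0 z t * Z 1 z t) * (((2:ℕ):ℝ) * Z 0 z t ^ 1 * (Z 1 z t / _) * _))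
      / (Z 0 z t ^ 2 * _) ^ 2) = _
    simp only [hVzz]
    push_cast
    field_simp
    ring
  have hdt : ∀ z, ∀ t ∈ Set.Ioo (0:ℝ) 1, HasDerivAt (fun t' => v z t') (Vt z t) t := by
    intro z t ht
    simp only [hvN]
    have h1 := hne1 t ht.2
    have h0 := hZ0 z t
    refine ((hasDerivAt_discount hψ ht).mul
      ((dNt 0 z t ht.2).div (dZt 0 z t ht.2) h0)).congr_deriv ?_
    change ψ t * E t * (N 0 z t / Z 0 z t) + E t * (((z * N 1 z t - N 2 z t / 2) / _ * Z 0 z t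
      - N 0 z t * ((z * Z 1 z t - Z 2 z t / 2) / _)) / Z 0 z t ^ 2) = _
    simp only [hVt]
    field_simp
  intro z t ht
  have h1 := hne1 t ht.2
  have h0 := hZ0 z t
  have hderz : ∀ t, t < 1 → (fun z' => deriv (fun z'' => v z'' t) z') = fun z' => Vz z' t :=
    fun t ht => funext fun z' => (hdz z' t ht).deriv
  have hev : ∀ᶠ p : ℝ × ℝ in nhds (z, t), p.2 ∈ Set.Ioo (0:ℝ) 1 :=
    continuous_snd.continuousAt.eventually (Ioo_mem_nhds ht.1 ht.2)
  have cE : ContinuousAt (fun p : ℝ × ℝ => E p.2) (z, t) :=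
    ContinuousAt.comp (x := (z, t)) (f := Prod.snd) (hasDerivAt_discount hψ ht).continuousAt
      continuousAt_snd
  have cψ : ContinuousAt (fun p : ℝ × ℝ => ψ p.2) (z, t) :=
    ContinuousAt.comp (x := (z, t)) (f := Prod.snd) (hψ.continuousAt (Icc_mem_nhds ht.1 ht.2))
      continuousAt_snd
  have cN' : ∀ k, ContinuousAt (fun p : ℝ × ℝ => N k p.1 p.2) (z, t) := fun k => cN k z t ht.2
  have cZ' : ∀ k, ContinuousAt (fun p : ℝ × ℝ => Z k p.1 p.2) (z, t) := fun k => cZ k z t ht.2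
  have n0 := cN' 0
  have n1 := cN' 1
  have n2 := cN' 2
  have z0 := cZ' 0
  have z1 := cZ' 1
  have z2 := cZ' 2
  refine ⟨(hdt z t ht).differentiableAt, (hdz z t ht.2).differentiableAt, ?_, ?_, ?_, ?_, ?_⟩
  · rw [hderz t ht.2]
    exact (hdzz z t ht.2).differentiableAt
  · have : ContinuousAt (fun p : ℝ × ℝ => Vt p.1 p.2) (z, t) := by
      simp only [hVt]
      refine ((cψ.mul cE).mul (n0.div z0 h0)).add (cE.mul (ContinuousAt.div ?_ ?_ ?_))
      · fun_prop
      · fun_prop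
      · simp only; positivity
    exact this.congr (hev.mono fun p hp => (hdt p.1 p.2 hp).deriv.symm)
  · have : ContinuousAt (fun p : ℝ × ℝ => Vz p.1 p.2) (z, t) := by
      simp only [hVz]
      refine cE.mul (ContinuousAt.div ?_ ?_ ?_)
      · fun_prop
      · fun_prop
      · simp only; positivity
    exact this.congr (hev.mono fun p hp => (hdz p.1 p.2 hp.2).deriv.symm)
  · have : ContinuousAt (fun p : ℝ × ℝ => Vzz p.1 p.2) (z, t) := by
      simp only [hVzz]
      refine cE.mul (ContinuousAt.div ?_ ?_ ?_)
      · fun_prop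
      · fun_prop
      · simp only; positivity
    refine this.congr (hev.mono fun p hp => ?_)
    simp only [hderz p.2 hp.2]
    exact (hdzz p.1 p.2 hp.2).deriv.symm
  · rw [hderz t ht.2, (hdzz z t ht.2).deriv, (hdz z t ht.2).deriv, (hdt z t ht).deriv, hμZ, hvN]
    simp only [hVt, hVz, hVzz]
    field_simp
    ring

end
end

section
/- Let J : [0,1] → {0,1} be right-continuous with left limits and with only finitely many discontinuities, and define τ_t = max(0, sup{u ∈ [0,t] : J(u) = 1}) for t ∈ [0,1] (with the convention sup ∅ = −∞, so τ_t = 0 if J vanishes on [0,t]). Then for every t ∈ [0,1], τ_t = ∫_0^t J(s) ds + ∑_{0 < s ≤ t} (s − τ_{s−})·(J(s) − J(s−)), where τ_{s−} denotes the left limit of τ at s; i.e., the process τ satisfies the dynamics dτ_t = J_t dt + (t − τ_{t−}) dJ_t. (Proposition 2.1, stated pathwise.) -/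
/-!
Write `G = τ - S`, where `S t` is the sum of the jump terms up to `t`; the claim is
`G t = ∫₀ᵗ J` together with `G 0 = 0`. On an interval `[a, b)` where `J` is constant the increment
of `G` over `[a, b]` can be read off directly (`increment_of_const`): if `J = 1` there, then `τ` is
the identity on `[a, b]`; if `J = 0` there, then `τ` is frozen on `[a, b)`, and the jump term at `b`
records precisely whether `τ` jumps to `b`. Since `J` is `{0,1}`-valued with one-sided limits and
right-continuous, every point of `[0,1]` has such an interval on either side. The relation "`J` is
integrable between `x` and `y`, with integral `G y - G x`" is symmetric and transitive, so
connectedness of `[0,1]` propagates it from nearby points to the pair `0, t`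
(`IsPreconnected.induction₂`). Carrying integrability in the relation makes a separate proof that
`J` is integrable unnecessary.
-/

open MeasureTheory ProbabilityTheory Real Set Filter
open scoped ENNReal NNReal Classical

noncomputable section

lemma eq_of_abs_sub_lt_one {x y : ℝ} (hx : x = 0 ∨ x = 1) (hy : y = 0 ∨ y = 1)
    (h : |x - y| < 1) : x = y := by
  rcases hx with rfl | rfl <;> rcases hy with rfl | rfl <;> first | rfl | (norm_num at h)

/-- The last active time at an active time `b ≥ 0`, or at a left accumulation point `b` of an
interval of active times, is `b` itself. -/
lemma lastActive_eq_self {J : ℝ → ℝ} {a b : ℝ} (ha : 0 ≤ a) (hab : a ≤ b)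
    (h : J b = 1 ∨ (a < b ∧ ∀ s ∈ Set.Ico a b, J s = 1)) :
    max 0 (sSup {u ∈ Set.Icc (0:ℝ) b | J u = 1}) = b := by
  have hlub : IsLUB {u ∈ Set.Icc (0:ℝ) b | J u = 1} b := by
    refine ⟨fun u hu => hu.1.2, fun v hv => ?_⟩
    rcases h with h | ⟨hlt, h⟩
    · exact hv ⟨⟨ha.trans hab, le_rfl⟩, h⟩
    · refine le_of_forall_lt_imp_le_of_dense fun w hw => ?_
      have hm : max a w ∈ Set.Ico a b := ⟨le_max_left _ _, max_lt hlt hw⟩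
      exact (le_max_right a w).trans (hv ⟨⟨ha.trans hm.1, hm.2.le⟩, h _ hm⟩)
  have hne : {u ∈ Set.Icc (0:ℝ) b | J u = 1}.Nonempty := by
    rcases h with h | ⟨hlt, h⟩
    · exact ⟨b, ⟨ha.trans hab, le_rfl⟩, h⟩
    · exact ⟨a, ⟨ha, hab⟩, h a ⟨le_rfl, hlt⟩⟩
  rw [hlub.csSup_eq hne]
  exact max_eq_right (ha.trans hab)

/-- The active times up to `b` are those up to `a` when there is none in `(a, b]`. -/
lemma activeSet_eq {J : ℝ → ℝ} {a b : ℝ} (hab : a ≤ b) (h : ∀ s ∈ Set.Ioc a b, J s = 0) :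
    {u ∈ Set.Icc (0:ℝ) b | J u = 1} = {u ∈ Set.Icc (0:ℝ) a | J u = 1} := by
  ext u
  constructor
  · rintro ⟨⟨h0, hb⟩, hu⟩
    refine ⟨⟨h0, ?_⟩, hu⟩
    by_contra hlt
    have := h u ⟨not_le.mp hlt, hb⟩
    linarith
  · rintro ⟨⟨h0, ha⟩, hu⟩
    exact ⟨⟨h0, ha.trans hab⟩, hu⟩

/-- Over `[a, b]` with `J` constant on `[a, b)`, only the time `b` can contribute a jump term:
at an interior point `s` of the interval `J(s-) = J(s)`, whether or not `s` is listed in `D`. -/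
lemma jumpSum_increment {J Jm τm : ℝ → ℝ} {D : Finset ℝ} {a b c : ℝ} (ha : 0 ≤ a) (hab : a < b)
    (hJ : ∀ s ∈ Set.Ico a b, J s = c) (hJm : ∀ s ∈ Set.Ioc a b, Jm s = c)
    (hDb : b ∉ D → Jm b = J b) :
    ∑ s ∈ D.filter (fun s => s ∈ Set.Ioc (0:ℝ) b), (s - τm s) * (J s - Jm s)
      = ∑ s ∈ D.filter (fun s => s ∈ Set.Ioc (0:ℝ) a), (s - τm s) * (J s - Jm s)
        + (b - τm b) * (J b - Jm b) := by
  have hsplit : D.filter (fun s => s ∈ Set.Ioc (0:ℝ) b)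
      = D.filter (fun s => s ∈ Set.Ioc (0:ℝ) a) ∪ D.filter (fun s => s ∈ Set.Ioc a b) := by
    ext s
    simp only [Finset.mem_filter, Finset.mem_union, Set.mem_Ioc]
    grind
  have hdisj : Disjoint (D.filter (fun s => s ∈ Set.Ioc (0:ℝ) a))
      (D.filter (fun s => s ∈ Set.Ioc a b)) := by
    rw [Finset.disjoint_left]
    simp only [Finset.mem_filter, Set.mem_Ioc]
    grind
  rw [hsplit, Finset.sum_union hdisj]
  congr 1
  refine Finset.sum_eq_single b (fun s hs hsb => ?_) (fun hb => ?_)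
  · have hs' := (Finset.mem_filter.mp hs).2
    rw [hJm s hs', hJ s ⟨hs'.1.le, lt_of_le_of_ne hs'.2 hsb⟩]
    ring
  · have : b ∉ D := fun h => hb (Finset.mem_filter.mpr ⟨h, hab, le_rfl⟩)
    rw [hDb this]
    ring

/-- The dynamics over an interval `[a, b]` such that `J` is constant on `[a, b)`. -/
lemma increment_of_const {J Jm : ℝ → ℝ} (hJ01 : ∀ s, J s = 0 ∨ J s = 1)
    (hll : ∀ s ∈ Set.Ioc (0:ℝ) 1, Filter.Tendsto J (nhdsWithin s (Set.Iio s)) (nhds (Jm s)))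
    {D : Finset ℝ} (hD : ∀ s ∈ Set.Ioc (0:ℝ) 1, s ∉ D → Jm s = J s)
    {τ τm : ℝ → ℝ}
    (hτ : ∀ t, τ t = max 0 (sSup {u ∈ Set.Icc (0:ℝ) t | J u = 1}))
    (hτm : ∀ s ∈ Set.Ioc (0:ℝ) 1, Filter.Tendsto τ (nhdsWithin s (Set.Iio s)) (nhds (τm s)))
    {a b : ℝ} (ha : 0 ≤ a) (hab : a < b) (hb : b ≤ 1) (hJ : ∀ s ∈ Set.Ico a b, J s = J a) :
    IntervalIntegrable J volume a b ∧
      (τ b - ∑ s ∈ D.filter (fun s => s ∈ Set.Ioc (0:ℝ) b), (s - τm s) * (J s - Jm s))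
        - (τ a - ∑ s ∈ D.filter (fun s => s ∈ Set.Ioc (0:ℝ) a), (s - τm s) * (J s - Jm s))
      = ∫ s in a..b, J s := by
  have hIoo : Set.EqOn (fun _ : ℝ => J a) J (Set.Ioo a b) :=
    fun s hs => (hJ s ⟨hs.1.le, hs.2⟩).symm
  have hint : IntervalIntegrable J volume a b := by
    rw [intervalIntegrable_iff_integrableOn_Ioo_of_le hab.le]
    exact (integrableOn_const (by simp)).congr_fun hIoo measurableSet_Ioo
  have hval : ∫ s in a..b, J s = (b - a) * J a := by
    rw [intervalIntegral.integral_of_le hab.le, integral_Ioc_eq_integral_Ioo,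
      ← setIntegral_congr_fun measurableSet_Ioo hIoo]
    simp [hab.le]
  have hJm : ∀ s ∈ Set.Ioc a b, Jm s = J a := by
    intro s hs
    refine tendsto_nhds_unique (hll s ⟨ha.trans_lt hs.1, hs.2.trans hb⟩)
      (tendsto_const_nhds.congr' ?_)
    filter_upwards [Ioo_mem_nhdsLT hs.1] with u hu
    exact (hJ u ⟨hu.1.le, hu.2.trans_le hs.2⟩).symm
  have hb' : b ∈ Set.Ioc (0:ℝ) 1 := ⟨ha.trans_lt hab, hb⟩
  refine ⟨hint, ?_⟩
  rw [hval, jumpSum_increment ha hab hJ hJm (hD b hb'), hJm b ⟨hab, le_rfl⟩]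
  rcases hJ01 a with h0 | h1
  · have hconst : ∀ t ∈ Set.Ico a b, τ t = τ a := by
      intro t ht
      rw [hτ, hτ, activeSet_eq ht.1 fun s hs => (hJ s ⟨hs.1.le, hs.2.trans_lt ht.2⟩).trans h0]
    have hm : τm b = τ a := by
      refine tendsto_nhds_unique (hτm b hb') (tendsto_const_nhds.congr' ?_)
      filter_upwards [Ioo_mem_nhdsLT hab] with u hu
      exact (hconst u ⟨hu.1.le, hu.2⟩).symm
    rcases hJ01 b with hb0 | hb1
    · have : τ b = τ a := by
        rw [hτ, hτ, activeSet_eq hab.le]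
        intro s hs
        rcases hs.2.lt_or_eq with h | rfl
        · exact (hJ s ⟨hs.1.le, h⟩).trans h0
        · exact hb0
      rw [this, hm, h0, hb0]
      ring
    · have : τ b = b := by rw [hτ, lastActive_eq_self ha hab.le (Or.inl hb1)]
      rw [this, hm, h0, hb1]
      ring
  · have hid : ∀ t ∈ Set.Ico a b, τ t = t := by
      intro t ht
      rw [hτ, lastActive_eq_self ha ht.1 (Or.inl ((hJ t ht).trans h1))]
    have hm : τm b = b := by
      refine tendsto_nhds_unique (hτm b hb') (Filter.Tendsto.congr' ?_
        (tendsto_id.mono_left nhdsWithin_le_nhds))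
      filter_upwards [Ioo_mem_nhdsLT hab] with u hu
      exact (hid u ⟨hu.1.le, hu.2⟩).symm
    have : τ b = b := by
      rw [hτ, lastActive_eq_self ha hab.le (Or.inr ⟨hab, fun s hs => (hJ s hs).trans h1⟩)]
    rw [this, hm, hid a ⟨le_rfl, hab⟩, h1]
    ring

/-- Proposition 2.1, stated pathwise.
For a `{0,1}`-valued càdlàg switching pattern `J` on `[0,1]` with finitely many discontinuities,
the last-active-time `τ_t = max(0, sup{u ≤ t : J(u) = 1})` satisfies
`τ_t = ∫₀ᵗ J(s) ds + ∑_{0<s≤t} (s − τ_{s−})(J(s) − J(s−))`,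
i.e. `dτ_t = J_t dt + (t − τ_{t−}) dJ_t`. -/
theorem last_active_time_dynamics
    (J Jm : ℝ → ℝ)
    (hJ01 : ∀ s, J s = 0 ∨ J s = 1)
    (hrc : ∀ s ∈ Set.Ico (0:ℝ) 1, ContinuousWithinAt J (Set.Ici s) s)
    (hll : ∀ s ∈ Set.Ioc (0:ℝ) 1, Filter.Tendsto J (nhdsWithin s (Set.Iio s)) (nhds (Jm s)))
    (D : Finset ℝ)
    (hD : ∀ s ∈ Set.Ioc (0:ℝ) 1, s ∉ D → Jm s = J s)
    (τ τm : ℝ → ℝ)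
    (hτ : ∀ t, τ t = max 0 (sSup {u ∈ Set.Icc (0:ℝ) t | J u = 1}))
    (hτm : ∀ s ∈ Set.Ioc (0:ℝ) 1, Filter.Tendsto τ (nhdsWithin s (Set.Iio s)) (nhds (τm s))) :
    ∀ t ∈ Set.Icc (0:ℝ) 1,
      τ t = (∫ s in (0:ℝ)..t, J s)
        + ∑ s ∈ D.filter (fun s => s ∈ Set.Ioc (0:ℝ) t), (s - τm s) * (J s - Jm s) := by
  have key := fun {a b : ℝ} => increment_of_const (a := a) (b := b) hJ01 hll hD hτ hτm
  set G : ℝ → ℝ := fun t =>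
    τ t - ∑ s ∈ D.filter (fun s => s ∈ Set.Ioc (0:ℝ) t), (s - τm s) * (J s - Jm s) with hG
  let P : ℝ → ℝ → Prop := fun x y =>
    IntervalIntegrable J volume x y ∧ G y - G x = ∫ s in x..y, J s
  have hsymm : ∀ x y, P x y → P y x := by
    rintro x y ⟨h1, h2⟩
    refine ⟨h1.symm, ?_⟩
    rw [intervalIntegral.integral_symm, ← h2]
    ring
  have htrans : ∀ x y z, P x y → P y z → P x z := by
    rintro x y z ⟨h1, h2⟩ ⟨h3, h4⟩
    refine ⟨h1.trans h3, ?_⟩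
    rw [← intervalIntegral.integral_add_adjacent_intervals h1 h3, ← h2, ← h4]
    ring
  have hrefl : ∀ x, P x x := fun x => ⟨IntervalIntegrable.refl, by simp⟩
  have hright : ∀ x ∈ Set.Icc (0:ℝ) 1, ∃ v > x, ∀ y ∈ Set.Ioo x v, y ≤ 1 → P x y := by
    intro x hx
    rcases hx.2.lt_or_eq with hx1 | rfl
    · have hev := (hrc x ⟨hx.1, hx1⟩).eventually (Metric.ball_mem_nhds (J x) one_pos)
      obtain ⟨v, hv, hsub⟩ := mem_nhdsGE_iff_exists_Ico_subset.mp hev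
      refine ⟨v, hv, fun y hy hy1 => key hx.1 hy.1 hy1 fun s hs => ?_⟩
      have hs' : J s ∈ Metric.ball (J x) 1 := hsub ⟨hs.1, hs.2.trans hy.2⟩
      rw [Metric.mem_ball, Real.dist_eq] at hs'
      exact eq_of_abs_sub_lt_one (hJ01 s) (hJ01 x) hs'
    · exact ⟨2, by norm_num, fun y hy hy1 => absurd hy.1 (not_lt.mpr hy1)⟩
  have hleft : ∀ x ∈ Set.Icc (0:ℝ) 1, ∃ u < x, ∀ y ∈ Set.Ioo u x, 0 ≤ y → P x y := by
    intro x hx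
    rcases hx.1.lt_or_eq with hx0 | rfl
    · -- Radius `1/2` around `Jm x` makes any two nearby values of `J` closer than `1`,
      -- so they coincide without knowing that `Jm x` is itself `0` or `1`.
      have hev := (hll x ⟨hx0, hx.2⟩).eventually
        (Metric.ball_mem_nhds (Jm x) (one_half_pos (α := ℝ)))
      obtain ⟨u, hu, hsub⟩ := (mem_nhdsLT_iff_exists_Ioo_subset).mp hev
      refine ⟨u, hu, fun y hy hy0 => hsymm _ _ (key hy0 hy.2 hx.2 fun s hs => ?_)⟩
      have hs' : J s ∈ Metric.ball (Jm x) (1 / 2) := hsub ⟨hy.1.trans_le hs.1, hs.2⟩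
      have hy' : J y ∈ Metric.ball (Jm x) (1 / 2) := hsub hy
      rw [Metric.mem_ball, Real.dist_eq, abs_lt] at hs' hy'
      exact eq_of_abs_sub_lt_one (hJ01 s) (hJ01 y)
        (abs_lt.mpr ⟨by linarith [hs'.1, hy'.2], by linarith [hs'.2, hy'.1]⟩)
    · exact ⟨-1, by norm_num, fun y hy hy0 => absurd hy.2 (not_lt.mpr hy0)⟩
  have hloc : ∀ x ∈ Set.Icc (0:ℝ) 1, ∀ᶠ y in nhdsWithin x (Set.Icc (0:ℝ) 1), P x y := by
    intro x hx
    obtain ⟨v, hv, hv'⟩ := hright x hx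
    obtain ⟨u, hu, hu'⟩ := hleft x hx
    filter_upwards [mem_nhdsWithin_of_mem_nhds (Ioo_mem_nhds hu hv), self_mem_nhdsWithin]
      with y hy hyI
    rcases lt_trichotomy y x with h | rfl | h
    · exact hu' y ⟨hy.1, h⟩ hyI.1
    · exact hrefl _
    · exact hv' y ⟨h, hy.2⟩ hyI.2
  intro t ht
  have hP : P 0 t := isPreconnected_Icc.induction₂ P hloc
    (fun x y z _ _ _ => htrans x y z) (fun x y _ _ => hsymm x y)
    (Set.left_mem_Icc.mpr zero_le_one) ht
  have hG0 : G 0 = 0 := by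
    have hle : sSup {u ∈ Set.Icc (0:ℝ) 0 | J u = 1} ≤ 0 :=
      Real.sSup_nonpos fun u hu => hu.1.2
    simp only [hG, hτ 0, max_eq_left hle, Set.Ioc_self]
    simp
  have h := hP.2
  rw [hG0] at h
  simp only [hG] at h
  linarith

end
end

section
/- Let X be a real random variable with law ν having finite exponential moments, let β^(1),…,β^(n) be mutually independent standard Brownian bridges on [0,1] independent of X, σ_1,…,σ_n > 0, ξ^(i)_t = t·X + σ_i β^(i)_t, let J^(1),…,J^(n) : [0,1] → {0,1} be deterministic right-continuous functions with finitely many discontinuities, τ^(i)_t = max(0, sup{u ∈ [0,t] : J^(i)(u) = 1}) (sup ∅ = −∞), and ℱ_t = σ(J^(i)(u)·ξ^(i)_u : 0 ≤ u ≤ t, 1 ≤ i ≤ n). Fix t ∈ [0,1) with active set A_t = {i : J^(i)(t) = 1} nonempty, and define the effective volatility σ̂_t = (∑_{i∈A_t} σ_i^{-2})^{-1/2}, the effective information ξ̂_t = σ̂_t² ∑_{i∈A_t} σ_i^{-2} ξ^(i)_t, and the complementary information η_t(x) = ∏_{i∉A_t} h(x, ξ^(i)_{τ^(i)_t}, τ^(i)_t,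 σ_i) (equal to 1 if A_t = {1,…,n}). Then for every bounded measurable φ : ℝ → ℝ, almost surely E[φ(X) | ℱ_t] = (∫ φ(x) h(x, ξ̂_t, t, σ̂_t) η_t(x) ν(dx)) / (∫ h(x, ξ̂_t, t, σ̂_t) η_t(x) ν(dx)). (Proposition 2.7 for a deterministic switching pattern.) -/
/-!
The observation of the `i`-th channel up to time `t` is worth exactly its last observed value. Let
`T i` be the last time in `[0,t]` at which channel `i` is visible, so `T i = t` if `i` is active and
`T i = τ i t` otherwise, and let `Y` collect all `ξ i u` with `u ≤ T i`.

*Likelihood.* Given `X = x`, `Y` is the family of scaled bridges `σ i * β i u` shifted by `u * x`.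
A finite-dimensional Cameron–Martin computation shows that the shifted family has the law of the
unshifted one reweighted by `∏ i, h(x, σ i * β i (T i), T i, σ i)`: a shift by `c * s * (1 - T)` is
the covariance of `β s` with `c * β T` for `s ≤ T`, so tilting by `exp (c * β T)` produces it.
This is checked on moment generating functions of linear forms (`map_shift_linearForm`), and carries
over to path space because a law there is determined by the laws of finite linear forms
(`map_shift_paths`). As `X` is independent of the bridges, `(X, Y)` has density
`H(x, y) = ∏ i, h(x, y_{i, T i}, T i, σ i)` with respect to `ν ⊗ law(σ β)`
(`map_prodMk_eq_withDensity`).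

*Bayes formula.* The ratio `Z = ∫ φ H(·, Y) dν / ∫ H(·, Y) dν` therefore has the same integral as
`φ(X)` over every event in `σ(Y)` (`bayes_setIntegral`).

*Change of σ-algebra.* The observation σ-algebra `ℱ_t` is contained in `σ(Y)`. On the other
hand `Z` depends on `Y` only through the values `ξ i (T i)`, each of which agrees almost surely with an
`ℱ_t`-measurable variable: it is observed, or a limit of observed values by path continuity, or
`T i = 0` and it vanishes almost surely. Hence `Z = E[φ(X) | ℱ_t]`.

*Effective quantities.* All active channels share the time `t`, and the product of their likelihoods
is a single likelihood in the precision-weighted mean (`hfun_effective`).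
-/

open MeasureTheory ProbabilityTheory Real Set Filter
open scoped ENNReal NNReal Classical

noncomputable section

/-! ### Linear forms in independent Brownian bridges -/

/-- The bridge covariance is positive semidefinite, being the covariance of the indicators of
`(-∞, s]` under Lebesgue measure on `[0,1]`. Without this the truncation `Real.toNNReal` in
`IsCenteredGaussianCov` could not be removed. -/
lemma bridge_quadForm_nonneg {ι : Type*} [Fintype ι] (s a : ι → ℝ)
    (hs : ∀ i, s i ∈ Set.Icc (0:ℝ) 1) :
    0 ≤ ∑ i, ∑ j, a i * a j * (min (s i) (s j) - s i * s j) := by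
  let μ : Measure ℝ := volume.restrict (Set.Icc 0 1)
  have hμ : IsProbabilityMeasure μ := ⟨by simp [μ]⟩
  let f : ι → ℝ → ℝ := fun i => (Set.Iic (s i)).indicator 1
  have hf : ∀ i, MemLp (f i) 2 μ := fun i =>
    (memLp_const (1:ℝ)).indicator measurableSet_Iic
  have hE : ∀ r ∈ Set.Icc (0:ℝ) 1, ∫ u, (Set.Iic r).indicator (1 : ℝ → ℝ) u ∂μ = r := by
    intro r hr
    rw [integral_indicator_one measurableSet_Iic, measureReal_restrict_apply measurableSet_Iic,
      show Set.Iic r ∩ Set.Icc 0 1 = Set.Icc 0 r by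
        ext u; simp only [Set.mem_inter_iff, Set.mem_Iic, Set.mem_Icc]
        constructor
        · rintro ⟨h1, h2, h3⟩; exact ⟨h2, h1⟩
        · rintro ⟨h1, h2⟩; exact ⟨h2, h1, h2.trans hr.2⟩]
    simp [hr.1]
  have hcov : ∀ i j, cov[f i, f j; μ] = min (s i) (s j) - s i * s j := by
    intro i j
    have hij : f i * f j = (Set.Iic (min (s i) (s j))).indicator 1 := by
      simp only [f]
      rw [← Set.inter_indicator_one, Set.Iic_inter_Iic]
    rw [covariance_eq_sub (hf i) (hf j), hij, hE _ ⟨le_min (hs i).1 (hs j).1,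
      (min_le_left _ _).trans (hs i).2⟩, hE _ (hs i), hE _ (hs j)]
  have hvar := variance_fun_sum (μ := μ) (X := fun i u => a i * f i u)
    (fun i => (hf i).const_mul (a i))
  have : ∀ i j, cov[fun u => a i * f i u, fun u => a j * f j u; μ]
      = a i * a j * (min (s i) (s j) - s i * s j) := by
    intro i j
    rw [covariance_const_mul_left, covariance_const_mul_right, hcov]; ring
  simp only [this] at hvar
  rw [← hvar]
  exact variance_nonneg _ _

/-- Two real laws with the same moment generating function, finite everywhere, coincide.
Finiteness is expressed as positivity, the Bochner integral being `0` at a non-integrable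
exponential. -/
lemma map_eq_of_mgf_eq {Ω Ω' : Type*} [MeasurableSpace Ω] [MeasurableSpace Ω']
    {μ : Measure Ω} {μ' : Measure Ω'} [IsProbabilityMeasure μ] [IsFiniteMeasure μ']
    {X : Ω → ℝ} {Y : Ω' → ℝ} (hX : Measurable X) (hY : Measurable Y)
    (h : mgf X μ = mgf Y μ') (hpos : ∀ t, 0 < mgf X μ t) :
    μ.map X = μ'.map Y := by
  refine Measure.ext_of_complexMGF_eq hX.aemeasurable hY.aemeasurable ?_
  have huniv : integrableExpSet X μ = Set.univ := by
    ext t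
    have := hpos t
    rw [mgf_pos_iff] at this
    simpa [integrableExpSet] using this
  funext z
  exact eqOn_complexMGF_of_mgf h (by simp [huniv])

lemma IsStdBrownianBridge.mgf_linearForm {Ω : Type*} [MeasurableSpace Ω] {P : Measure Ω}
    {β : ℝ → Ω → ℝ} (hβ : IsStdBrownianBridge P β) {ι : Type*} [Fintype ι]
    (s a : ι → ℝ) (hs : ∀ i, s i ∈ Set.Icc (0:ℝ) 1) :
    mgf (fun ω => ∑ j, a j * β (s j) ω) P 1
      = Real.exp ((∑ i, ∑ j, a i * a j * (min (s i) (s j) - s i * s j)) / 2) := by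
  let e := (Fintype.equivFin ι).symm
  have h := hβ.2.2 (Fintype.card ι) (s ∘ e) (fun i => hs _) (a ∘ e)
  have h1 : (fun ω => ∑ i, (a ∘ e) i * β ((s ∘ e) i) ω) = fun ω => ∑ j, a j * β (s j) ω := by
    funext ω
    exact Equiv.sum_comp e (fun j => a j * β (s j) ω)
  have h2 : ∑ i, ∑ j, (a ∘ e) i * (a ∘ e) j * (min ((s ∘ e) i) ((s ∘ e) j)
      - (s ∘ e) i * (s ∘ e) j) = ∑ i, ∑ j, a i * a j * (min (s i) (s j) - s i * s j) := by
    rw [← Equiv.sum_comp e]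
    refine Finset.sum_congr rfl fun i _ => ?_
    exact Equiv.sum_comp e (fun j => a (e i) * a j * (min (s (e i)) (s j) - s (e i) * s j))
  rw [h1, h2] at h
  rw [mgf_gaussianReal h, Real.coe_toNNReal _ (bridge_quadForm_nonneg s a hs)]
  simp

/-- The Gaussian moment generating function of a linear form mixing the bridges, where the `j`-th term
uses bridge `κ j`; terms from different bridges are uncorrelated. -/
lemma mgf_linearForm_bridges {Ω : Type*} [MeasurableSpace Ω] {P : Measure Ω} {n : ℕ}
    {β : Fin n → ℝ → Ω → ℝ} (hβ : ∀ i, IsStdBrownianBridge P (β i))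
    (hind : iIndep (fun i => sigmaUpTo (β i) 1) P) {ι : Type*} [Fintype ι]
    (κ : ι → Fin n) (s a : ι → ℝ) (hs : ∀ i, s i ∈ Set.Icc (0:ℝ) 1) :
    mgf (fun ω => ∑ j, a j * β (κ j) (s j) ω) P 1
      = Real.exp ((∑ i, ∑ j, if κ i = κ j then
          a i * a j * (min (s i) (s j) - s i * s j) else 0) / 2) := by
  let W : Fin n → Ω → ℝ := fun i ω => ∑ j, (if κ j = i then a j else 0) * β i (s j) ω
  have hW : ∀ i, Measurable[sigmaUpTo (β i) 1] (W i) := by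
    intro i
    refine Finset.measurable_sum _ fun j _ => Measurable.const_mul ?_ _
    refine Measurable.mono (comap_measurable (β i (s j))) ?_ le_rfl
    exact le_iSup₂_of_le (s j) (hs j) le_rfl
  have hWm : ∀ i, Measurable (W i) := fun i =>
    Finset.measurable_sum _ fun j _ => ((hβ i).1 _).const_mul _
  have hindW : iIndepFun W P := by
    rw [iIndepFun_iff_iIndep, iIndep_iff]
    rw [iIndep_iff] at hind
    intro S f hf
    exact hind S fun i hi => (hW i).comap_le _ (hf i hi)
  have hsum : (fun ω => ∑ j, a j * β (κ j) (s j) ω) = ∑ i, W i := by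
    funext ω
    simp only [Finset.sum_apply, W]
    rw [Finset.sum_comm]
    refine Finset.sum_congr rfl fun j _ => ?_
    simp
  rw [hsum, hindW.mgf_sum hWm]
  simp only [W]
  simp only [(hβ _).mgf_linearForm s _ hs]
  rw [← Real.exp_sum]
  congr 1
  rw [← Finset.sum_div]
  congr 1
  rw [Finset.sum_comm]
  refine Finset.sum_congr rfl fun j _ => ?_
  rw [Finset.sum_comm]
  refine Finset.sum_congr rfl fun k _ => ?_
  simp only [ite_mul, zero_mul, mul_ite, mul_zero]
  simp

/-- Cameron–Martin for one linear form: tilting by `∑ i, c i * β i (T i)` shifts `β i s` by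
`Cov(β i s, c i * β i (T i)) = c i * (s * (1 - T i))` when `s ≤ T i`. -/
lemma map_shift_linearForm {Ω : Type*} [MeasurableSpace Ω] {P : Measure Ω}
    [IsProbabilityMeasure P] {n : ℕ}
    {β : Fin n → ℝ → Ω → ℝ} (hβ : ∀ i, IsStdBrownianBridge P (β i))
    (hind : iIndep (fun i => sigmaUpTo (β i) 1) P) {ι : Type*} [Fintype ι]
    (T c : Fin n → ℝ) (hT : ∀ i, T i ∈ Set.Icc (0:ℝ) 1)
    (κ : ι → Fin n) (s a : ι → ℝ) (hs : ∀ j, s j ∈ Set.Icc (0:ℝ) (T (κ j))) :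
    P.map (fun ω => ∑ j, a j * (β (κ j) (s j) ω + c (κ j) * (s j * (1 - T (κ j)))))
      = (P.withDensity (fun ω => ENNReal.ofReal (Real.exp (∑ i, (c i * β i (T i) ω
          - c i ^ 2 * (T i * (1 - T i)) / 2))))).map (fun ω => ∑ j, a j * β (κ j) (s j) ω) := by
  have hs1 : ∀ j, s j ∈ Set.Icc (0:ℝ) 1 := fun j => ⟨(hs j).1, (hs j).2.trans (hT _).2⟩
  have hm : ∀ i u, Measurable (β i u) := fun i u => (hβ i).1 u
  set K := ∑ j, a j * (c (κ j) * (s j * (1 - T (κ j)))) with hK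
  set q := ∑ i, c i ^ 2 * (T i * (1 - T i)) with hq
  set Q := ∑ i, ∑ j, if κ i = κ j then
          a i * a j * (min (s i) (s j) - s i * s j) else 0 with hQ
  have hU : ∀ θ : ℝ, ∫ ω, Real.exp (θ * ∑ j, a j * β (κ j) (s j) ω) ∂P
      = Real.exp (θ ^ 2 * Q / 2) := by
    intro θ
    have h := mgf_linearForm_bridges hβ hind κ s (fun j => θ * a j) hs1
    simp only [mgf, one_mul] at h
    simp only [Finset.mul_sum, ← mul_assoc]
    rw [h]
    congr 2
    rw [hQ, Finset.mul_sum]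
    refine Finset.sum_congr rfl fun i _ => ?_
    rw [Finset.mul_sum]
    refine Finset.sum_congr rfl fun j _ => ?_
    split_ifs <;> ring
  have hUV : ∀ θ : ℝ, ∫ ω, Real.exp (θ * ∑ j, a j * β (κ j) (s j) ω
        + ∑ i, c i * β i (T i) ω) ∂P
      = Real.exp (θ ^ 2 * Q / 2 + θ * K + q / 2) := by
    intro θ
    -- the exponent is a linear form indexed by the disjoint union of `ι` and the set of bridges
    have h := mgf_linearForm_bridges hβ hind (Sum.elim κ (fun i => i))
      (Sum.elim s T) (Sum.elim (fun j => θ * a j) c)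
      (by rintro (j | i); exacts [hs1 j, hT i])
    simp only [mgf, one_mul, Fintype.sum_sum_type, Sum.elim_inl, Sum.elim_inr] at h
    simp only [Finset.mul_sum, ← mul_assoc]
    rw [h]
    refine congrArg Real.exp ?_
    rw [show θ ^ 2 * Q / 2 + θ * K + q / 2 = (θ ^ 2 * Q + 2 * (θ * K) + q) / 2 by ring]
    refine congrArg (· / 2) ?_
    have e1 : ∀ j i, (if κ j = i then θ * a j * c i * (min (s j) (T i) - s j * T i) else 0)
        = if κ j = i then θ * a j * c i * (s j - s j * T i) else 0 := by
      intro j i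
      split_ifs with hji
      · subst hji; rw [min_eq_left (hs j).2]
      · rfl
    have e2 : ∀ i j, (if i = κ j then c i * (θ * a j) * (min (T i) (s j) - T i * s j) else 0)
        = if κ j = i then θ * a j * c i * (s j - s j * T i) else 0 := by
      intro i j
      by_cases hji : κ j = i
      · subst hji; rw [min_eq_right (hs j).2]; simp; ring
      · rw [if_neg hji, if_neg (Ne.symm hji)]
    simp only [Finset.sum_add_distrib]
    -- restated so that the decidability instances are the ones appearing in `e1` and `e2`
    change ((∑ j, ∑ k, if κ j = κ k then
          θ * a j * (θ * a k) * (min (s j) (s k) - s j * s k) else 0)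
        + ∑ j, ∑ i, if κ j = i then θ * a j * c i * (min (s j) (T i) - s j * T i) else 0)
      + ((∑ i, ∑ j, if i = κ j then c i * (θ * a j) * (min (T i) (s j) - T i * s j) else 0)
        + ∑ i, ∑ i', if i = i' then c i * c i' * (min (T i) (T i') - T i * T i') else 0)
      = _
    simp only [e1, e2]
    rw [Finset.sum_comm (s := (Finset.univ : Finset (Fin n))) (t := (Finset.univ : Finset ι))]
    simp only [Finset.sum_ite_eq, Finset.mem_univ, if_true, min_self]
    have e3 : θ * K = ∑ j, θ * a j * c (κ j) * (s j - s j * T (κ j)) := by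
      rw [hK, Finset.mul_sum]
      exact Finset.sum_congr rfl fun j _ => by ring
    have e4 : θ ^ 2 * Q = ∑ i, ∑ j, (if κ i = κ j then
          θ * a i * (θ * a j) * (min (s i) (s j) - s i * s j) else 0) := by
      rw [hQ, Finset.mul_sum]
      refine Finset.sum_congr rfl fun i _ => ?_
      rw [Finset.mul_sum]
      refine Finset.sum_congr rfl fun j _ => ?_
      split_ifs <;> ring
    have e5 : q = ∑ i, c i * c i * (T i - T i * T i) :=
      Finset.sum_congr rfl fun j _ => by ring
    rw [e3, e4, e5]
    ring
  have hdens : ∀ ω, (∑ i, (c i * β i (T i) ω - c i ^ 2 * (T i * (1 - T i)) / 2))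
      = (∑ i, c i * β i (T i) ω) - q / 2 := by
    intro ω
    rw [Finset.sum_sub_distrib, ← Finset.sum_div]
  simp only [hdens]
  have hint : Integrable (fun ω => Real.exp ((∑ i, c i * β i (T i) ω) - q / 2)) P := by
    have h0 := hUV 0
    simp only [zero_mul, zero_add] at h0
    have : Integrable (fun ω => Real.exp (∑ i, c i * β i (T i) ω)) P := by
      -- the integral `h0` is nonzero, hence not the junk value of a non-integrable function
      by_contra hcon
      rw [integral_undef hcon] at h0
      exact (Real.exp_pos _).ne h0
    simp only [Real.exp_sub]
    exact this.div_const _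
  have hfin : IsFiniteMeasure (P.withDensity
      (fun ω => ENNReal.ofReal (Real.exp ((∑ i, c i * β i (T i) ω) - q / 2)))) :=
    isFiniteMeasure_withDensity_ofReal hint.2
  have hL : ∀ θ, mgf (fun ω => ∑ j, a j * (β (κ j) (s j) ω
      + c (κ j) * (s j * (1 - T (κ j))))) P θ = Real.exp (θ ^ 2 * Q / 2 + θ * K) := by
    intro θ
    simp only [mgf, mul_add, Finset.sum_add_distrib, Real.exp_add]
    rw [integral_mul_const, hU]
  refine map_eq_of_mgf_eq (by fun_prop) (by fun_prop) ?_ ?_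
  · funext θ
    rw [hL, mgf, integral_withDensity_eq_integral_toReal_smul (by fun_prop) (by simp)]
    simp only [ENNReal.toReal_ofReal (Real.exp_pos _).le, smul_eq_mul, ← Real.exp_add]
    have : ∀ ω, Real.exp ((∑ i, c i * β i (T i) ω) - q / 2 + θ * ∑ j, a j * β (κ j) (s j) ω)
        = Real.exp (θ * ∑ j, a j * β (κ j) (s j) ω + ∑ i, c i * β i (T i) ω)
          * Real.exp (- (q / 2)) := by
      intro ω
      rw [← Real.exp_add]; congr 1; ring
    simp only [this]
    rw [integral_mul_const, hUV, ← Real.exp_add]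
    congr 1; ring
  · intro θ
    rw [hL]; exact Real.exp_pos _

/-! ### Joint law of the signal and the observed paths -/

/-- Cameron–Martin for the paths `σ i * β i` on `[0, T i]`: adding the drift `s * x` has the same
effect on the law as the density `∏ i, h(x, σ i * β i (T i), T i, σ i)`. -/
lemma map_shift_paths {Ω : Type*} [MeasurableSpace Ω] {P : Measure Ω}
    [IsProbabilityMeasure P] {n : ℕ}
    {β : Fin n → ℝ → Ω → ℝ} (hβ : ∀ i, IsStdBrownianBridge P (β i))
    (hind : iIndep (fun i => sigmaUpTo (β i) 1) P)
    {σ : Fin n → ℝ} (hσ : ∀ i, 0 < σ i)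
    {T : Fin n → ℝ} (hT : ∀ i, T i ∈ Set.Ico (0:ℝ) 1) (x : ℝ) :
    P.map (fun ω (p : {p : Fin n × ℝ // p.2 ∈ Set.Icc 0 (T p.1)}) =>
        p.1.2 * x + σ p.1.1 * β p.1.1 p.1.2 ω)
      = (P.withDensity (fun ω => ENNReal.ofReal
          (∏ i, hfun x (σ i * β i (T i) ω) (T i) (σ i)))).map
        (fun ω (p : {p : Fin n × ℝ // p.2 ∈ Set.Icc 0 (T p.1)}) =>
          σ p.1.1 * β p.1.1 p.1.2 ω) := by
  have hm : ∀ i u, Measurable (β i u) := fun i u => (hβ i).1 u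
  have hT1 : ∀ i, T i ∈ Set.Icc (0:ℝ) 1 := fun i => ⟨(hT i).1, (hT i).2.le⟩
  -- chosen so that `σ i * (c i * (s * (1 - T i))) = s * x`
  set c : Fin n → ℝ := fun i => x / (σ i * (1 - T i)) with hc
  have hdens : ∀ ω, ∏ i, hfun x (σ i * β i (T i) ω) (T i) (σ i)
      = Real.exp (∑ i, (c i * β i (T i) ω - c i ^ 2 * (T i * (1 - T i)) / 2)) := by
    intro ω
    rw [Real.exp_sum]
    refine Finset.prod_congr rfl fun i _ => ?_
    rw [hfun]
    congr 1
    have h1 := (hσ i).ne'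
    have h2 : 1 - T i ≠ 0 := by linarith [(hT i).2]
    simp only [hc]
    field_simp
  simp only [hdens]
  set Q := P.withDensity (fun ω => ENNReal.ofReal (Real.exp (∑ i, (c i * β i (T i) ω
          - c i ^ 2 * (T i * (1 - T i)) / 2)))) with hQ
  have hQp : IsProbabilityMeasure Q := by
    -- the empty linear form records the total masses only
    have h := map_shift_linearForm hβ hind T c hT1 (ι := Empty) Empty.elim Empty.elim
      Empty.elim (fun j => j.elim)
    have h2 := congrArg (fun μ => μ Set.univ) h
    simp only [Finset.univ_eq_empty, Finset.sum_empty] at h2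
    rw [Measure.map_apply measurable_const MeasurableSet.univ,
      Measure.map_apply measurable_const MeasurableSet.univ] at h2
    simp only [Set.preimage_univ, measure_univ] at h2
    exact ⟨h2.symm⟩
  have hm1 : Measurable (fun ω (p : {p : Fin n × ℝ // p.2 ∈ Set.Icc 0 (T p.1)}) =>
        p.1.2 * x + σ p.1.1 * β p.1.1 p.1.2 ω) :=
    measurable_pi_lambda _ fun p => by fun_prop
  have hm2 : Measurable (fun ω (p : {p : Fin n × ℝ // p.2 ∈ Set.Icc 0 (T p.1)}) =>
        σ p.1.1 * β p.1.1 p.1.2 ω) :=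
    measurable_pi_lambda _ fun p => by fun_prop
  have hfinQ : IsProbabilityMeasure (Q.map (fun ω
      (p : {p : Fin n × ℝ // p.2 ∈ Set.Icc 0 (T p.1)}) => σ p.1.1 * β p.1.1 p.1.2 ω)) :=
    Measure.isProbabilityMeasure_map hm2.aemeasurable
  refine IsProjectiveLimit.unique (P := fun J => (Q.map (fun ω
      (p : {p : Fin n × ℝ // p.2 ∈ Set.Icc 0 (T p.1)}) =>
        σ p.1.1 * β p.1.1 p.1.2 ω)).map J.restrict) (fun J => ?_) (fun J => rfl)
  have hfinP : IsProbabilityMeasure (P.map (fun ω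
      (p : {p : Fin n × ℝ // p.2 ∈ Set.Icc 0 (T p.1)}) =>
        p.1.2 * x + σ p.1.1 * β p.1.1 p.1.2 ω)) :=
    Measure.isProbabilityMeasure_map hm1.aemeasurable
  have hr := Finset.measurable_restrict (X := fun _ => ℝ) J
  refine Measure.ext_of_charFunDual ?_
  funext L
  rw [charFunDual_eq_charFun_map_one, charFunDual_eq_charFun_map_one,
    Measure.map_map (by fun_prop) hr, Measure.map_map (by fun_prop) hr,
    Measure.map_map (by fun_prop) hm1, Measure.map_map (by fun_prop) hm2]
  have hLv : ∀ v : J → ℝ, L v = ∑ j, L (Pi.single j 1) * v j := by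
    intro v
    have := LinearMap.pi_apply_eq_sum_univ (L : (J → ℝ) →ₗ[ℝ] ℝ) v
    simp only [ContinuousLinearMap.coe_coe, smul_eq_mul] at this
    rw [this]
    refine Finset.sum_congr rfl fun j _ => ?_
    rw [mul_comm]
    congr 2
    ext k
    simp [Pi.single_apply, eq_comm]
  have key := map_shift_linearForm hβ hind T c hT1 (ι := J) (fun j => j.1.1.1)
    (fun j => j.1.1.2) (fun j => L (Pi.single j 1) * σ j.1.1.1) (fun j => j.1.2)
  congr 1
  convert key using 2
  · funext ω
    rw [Function.comp_apply, Function.comp_apply, hLv]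
    refine Finset.sum_congr rfl fun j _ => ?_
    have h1 := (hσ j.1.1.1).ne'
    have h2 : 1 - T j.1.1.1 ≠ 0 := by linarith [(hT j.1.1.1).2]
    simp only [hc, Finset.restrict]
    field_simp
    ring
  · funext ω
    rw [Function.comp_apply, Function.comp_apply, hLv]
    refine Finset.sum_congr rfl fun j _ => ?_
    simp only [Finset.restrict]
    ring

/-- If `b` is independent of `X` and, for each `x`, the shifted noise `sh x b` has density `H x` with
respect to the law of `b`, then `(X, sh X b)` has density `H` with respect to the product law. -/
lemma map_prodMk_eq_withDensity {Ω E : Type*} [MeasurableSpace Ω] [MeasurableSpace E]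
    {P : Measure Ω} [IsProbabilityMeasure P] {X : Ω → ℝ} (hX : Measurable X)
    {b : Ω → E} (hb : Measurable b) (hXb : IndepFun X b P)
    {sh : ℝ → E → E} (hsh : Measurable (Function.uncurry sh))
    {H : ℝ → E → ℝ≥0∞} (hH : Measurable (Function.uncurry H))
    (hmap : ∀ x, P.map (fun ω => sh x (b ω)) = (P.withDensity (fun ω => H x (b ω))).map b) :
    P.map (fun ω => (X ω, sh (X ω) (b ω)))
      = ((P.map X).prod (P.map b)).withDensity (Function.uncurry H) := by
  have hprod := (indepFun_iff_map_prod_eq_prod_map_map hX.aemeasurable hb.aemeasurable).1 hXb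
  have hPX : IsProbabilityMeasure (P.map X) := Measure.isProbabilityMeasure_map hX.aemeasurable
  have hPb : IsProbabilityMeasure (P.map b) := Measure.isProbabilityMeasure_map hb.aemeasurable
  have hshx : ∀ x, Measurable (sh x) := fun x => hsh.comp measurable_prodMk_left
  have hHx : ∀ x, Measurable (H x) := fun x => hH.comp measurable_prodMk_left
  have hsh2 : Measurable (fun p : ℝ × E => (p.1, sh p.1 p.2)) := measurable_fst.prodMk hsh
  refine Measure.ext_of_lintegral _ fun f hf => ?_
  have hfx : ∀ x, Measurable (fun e => f (x, e)) := fun x => hf.comp measurable_prodMk_left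
  have h1 : P.map (fun ω => (X ω, sh (X ω) (b ω)))
      = ((P.map X).prod (P.map b)).map (fun p : ℝ × E => (p.1, sh p.1 p.2)) := by
    rw [← hprod, Measure.map_map hsh2 (hX.prodMk hb)]
    rfl
  rw [h1, lintegral_map hf hsh2,
    lintegral_prod (fun p : ℝ × E => f (p.1, sh p.1 p.2)) (hf.comp hsh2).aemeasurable,
    lintegral_withDensity_eq_lintegral_mul _ hH hf, lintegral_prod _ (hH.mul hf).aemeasurable]
  refine lintegral_congr fun x => ?_
  simp only [Pi.mul_apply, Function.uncurry_apply_pair]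
  calc ∫⁻ e, f (x, sh x e) ∂P.map b
      = ∫⁻ ω, f (x, sh x (b ω)) ∂P := lintegral_map ((hfx x).comp (hshx x)) hb
    _ = ∫⁻ e, f (x, e) ∂P.map (fun ω => sh x (b ω)) :=
        (lintegral_map (hfx x) ((hshx x).comp hb)).symm
    _ = ∫⁻ ω, f (x, b ω) ∂P.withDensity (fun ω => H x (b ω)) := by
        rw [hmap x, lintegral_map (hfx x) hb]
    _ = ∫⁻ ω, H x (b ω) * f (x, b ω) ∂P :=
        lintegral_withDensity_eq_lintegral_mul _ ((hHx x).comp hb) ((hfx x).comp hb)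
    _ = ∫⁻ e, H x e * f (x, e) ∂P.map b := (lintegral_map ((hHx x).mul (hfx x)) hb).symm

/-! ### Bayes formula -/

lemma measurable_bayesRatio {E : Type*} [MeasurableSpace E] {ν : Measure ℝ} [SFinite ν]
    {H : ℝ → E → ℝ} (hH : Measurable (Function.uncurry H)) {φ : ℝ → ℝ} (hφm : Measurable φ) :
    Measurable (fun e => (∫ x, φ x * H x e ∂ν) / (∫ x, H x e ∂ν)) := by
  have hH' : Measurable (fun p : ℝ × E => H p.1 p.2) := hH
  refine Measurable.div ?_ ?_
  · exact (StronglyMeasurable.integral_prod_left' (E := ℝ)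
      (f := fun p : ℝ × E => φ p.1 * H p.1 p.2) (μ := ν)
      (Measurable.stronglyMeasurable (by fun_prop))).measurable
  · exact (StronglyMeasurable.integral_prod_left' (E := ℝ)
      (f := fun p : ℝ × E => H p.1 p.2) (μ := ν) hH'.stronglyMeasurable).measurable

/-- Bayes formula: if `(X, Y)` has density `H` with respect to `ν ⊗ μ`, then the ratio
`∫ φ H(·, Y) dν / ∫ H(·, Y) dν` is bounded by `C` and has the same integral as `φ(X)` over the
events of `σ(Y)`. -/
lemma bayes_setIntegral {Ω E : Type*} [MeasurableSpace Ω] [MeasurableSpace E]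
    {P : Measure Ω} [IsProbabilityMeasure P] {X : Ω → ℝ} (hX : Measurable X)
    {Y : Ω → E} (hY : Measurable Y) {ν : Measure ℝ} [IsProbabilityMeasure ν]
    {μ : Measure E} [IsProbabilityMeasure μ] {H : ℝ → E → ℝ}
    (hH : Measurable (Function.uncurry H)) (hpos : ∀ x e, 0 < H x e)
    (hint : ∀ e, Integrable (fun x => H x e) ν)
    (hlaw : P.map (fun ω => (X ω, Y ω))
      = (ν.prod μ).withDensity (fun p => ENNReal.ofReal (H p.1 p.2)))
    {φ : ℝ → ℝ} (hφm : Measurable φ) {C : ℝ} (hφb : ∀ x, |φ x| ≤ C)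
    {B : Set E} (hB : MeasurableSet B) :
    (∀ e, |(∫ x, φ x * H x e ∂ν) / (∫ x, H x e ∂ν)| ≤ C) ∧
    ∫ ω in Y ⁻¹' B, (∫ x, φ x * H x (Y ω) ∂ν) / (∫ x, H x (Y ω) ∂ν) ∂P
      = ∫ ω in Y ⁻¹' B, φ (X ω) ∂P := by
  have hH' : Measurable (fun p : ℝ × E => H p.1 p.2) := hH
  have hDpos : ∀ e, 0 < ∫ x, H x e ∂ν := by
    intro e
    rw [integral_pos_iff_support_of_nonneg (fun x => (hpos x e).le) (hint e)]
    have : Function.support (fun x => H x e) = Set.univ := by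
      ext x; simp [(hpos x e).ne']
    simp [this]
  have hZm := measurable_bayesRatio (ν := ν) hH hφm
  have hZb : ∀ e, |(∫ x, φ x * H x e ∂ν) / (∫ x, H x e ∂ν)| ≤ C := by
    intro e
    rw [abs_div, abs_of_pos (hDpos e), div_le_iff₀ (hDpos e), ← integral_const_mul]
    rw [← Real.norm_eq_abs]
    refine norm_integral_le_of_norm_le ((hint e).const_mul C) (ae_of_all _ fun x => ?_)
    rw [Real.norm_eq_abs, abs_mul, abs_of_pos (hpos x e)]
    exact mul_le_mul_of_nonneg_right (hφb x) (hpos x e).le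
  refine ⟨hZb, ?_⟩
  set Z : E → ℝ := fun e => (∫ x, φ x * H x e ∂ν) / (∫ x, H x e ∂ν) with hZ
  have hofm : Measurable (fun p : ℝ × E => ENNReal.ofReal (H p.1 p.2)) := by fun_prop
  -- both sides are expectations of a bounded function of `(X, Y)` over the event `Y ∈ B`
  have gen : ∀ g : ℝ × E → ℝ, Measurable g → (∀ p, |g p| ≤ C) →
      ∫ ω in Y ⁻¹' B, g (X ω, Y ω) ∂P
        = ∫ e, ∫ x, H x e * (B.indicator (fun e => g (x, e)) e) ∂ν ∂μ := by
    intro g hg hgb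
    have hind : ∫ ω in Y ⁻¹' B, g (X ω, Y ω) ∂P
        = ∫ ω, (fun p : ℝ × E => B.indicator (fun e => g (p.1, e)) p.2) (X ω, Y ω) ∂P := by
      rw [← integral_indicator (hY hB)]
      rfl
    have hgm : Measurable (fun p : ℝ × E => B.indicator (fun e => g (p.1, e)) p.2) :=
      hg.indicator (measurable_snd hB)
    have hPl : IsProbabilityMeasure (P.map (fun ω => (X ω, Y ω))) :=
      Measure.isProbabilityMeasure_map (hX.prodMk hY).aemeasurable
    have hgint : Integrable (fun p : ℝ × E => B.indicator (fun e => g (p.1, e)) p.2)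
        (P.map (fun ω => (X ω, Y ω))) := by
      refine Integrable.of_bound hgm.aestronglyMeasurable C (ae_of_all _ fun p => ?_)
      exact (norm_indicator_le_norm_self _ _).trans (hgb _)
    rw [hind, ← integral_map (φ := fun ω => (X ω, Y ω)) (hX.prodMk hY).aemeasurable
      hgm.aestronglyMeasurable]
    rw [hlaw] at hgint ⊢
    rw [integral_withDensity_eq_integral_toReal_smul hofm (by simp)]
    rw [integrable_withDensity_iff_integrable_smul' hofm (by simp)] at hgint
    rw [integral_prod_symm _ hgint]
    simp only [ENNReal.toReal_ofReal (hpos _ _).le, smul_eq_mul]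
  have h1 := gen (fun p => φ p.1) (by fun_prop) (fun p => hφb _)
  have h2 := gen (fun p => Z p.2) (by fun_prop) (fun p => hZb _)
  simp only at h1 h2
  rw [h1, h2]
  congr 1
  funext e
  by_cases he : e ∈ B
  · simp only [Set.indicator_of_mem he]
    rw [integral_mul_const]
    simp only [hZ]
    rw [mul_div_cancel₀ _ (hDpos e).ne']
    simp only [mul_comm]
  · simp only [Set.indicator_of_notMem he]

/-! ### The Gaussian likelihood -/

lemma IsStdBrownianBridge.ae_zero {Ω : Type*} [MeasurableSpace Ω] {P : Measure Ω}
    {β : ℝ → Ω → ℝ} (hβ : IsStdBrownianBridge P β) : ∀ᵐ ω ∂P, β 0 ω = 0 := by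
  have h := hβ.2.2 1 (fun _ => 0) (fun _ => by simp) (fun _ => 1)
  simp only [Finset.univ_unique, Finset.sum_singleton, one_mul, mul_zero, min_self, sub_self,
    Real.toNNReal_zero, gaussianReal_zero_var] at h
  refine ae_of_ae_map (p := fun y => y = 0) (hβ.1 0).aemeasurable ?_
  rw [h, ae_dirac_eq]
  rfl

/-- The quadratic term of each exponent is nonpositive, so the product is at most `exp (lam * |x|)`
for a suitable `lam`. -/
lemma integrable_prod_hfun {ν : Measure ℝ} [IsProbabilityMeasure ν] (hν : FiniteExpMoments ν)
    {n : ℕ} {T σ : Fin n → ℝ} (hT : ∀ i, T i ∈ Set.Ico (0:ℝ) 1) (y : Fin n → ℝ) :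
    Integrable (fun x => ∏ i, hfun x (y i) (T i) (σ i)) ν := by
  set lam := ∑ i, |y i| / (σ i ^ 2 * (1 - T i)) with hlam
  have hden : ∀ i, 0 ≤ σ i ^ 2 * (1 - T i) := fun i =>
    mul_nonneg (sq_nonneg _) (by linarith [(hT i).2])
  have hlam0 : 0 ≤ lam := Finset.sum_nonneg fun i _ => div_nonneg (abs_nonneg _) (hden i)
  refine (hν (lam + 1) (by linarith)).mono' ?_ (ae_of_all _ fun x => ?_)
  · simp only [hfun]
    exact Measurable.aestronglyMeasurable (by fun_prop)
  · simp only [hfun]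
    rw [Real.norm_of_nonneg (Finset.prod_nonneg fun i _ => (Real.exp_pos _).le)]
    rw [← Real.exp_sum, Real.exp_le_exp]
    have : ∑ i, (x * y i - T i * x ^ 2 / 2) / (σ i ^ 2 * (1 - T i)) ≤ lam * |x| := by
      rw [hlam, Finset.sum_mul]
      refine Finset.sum_le_sum fun i _ => ?_
      rw [div_mul_eq_mul_div]
      refine div_le_div_of_nonneg_right ?_ (hden i)
      have h1 : x * y i ≤ |y i| * |x| := by
        rw [← abs_mul, mul_comm]; exact le_abs_self _
      have h2 : 0 ≤ T i * x ^ 2 := mul_nonneg (hT i).1 (sq_nonneg _)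
      linarith
    nlinarith [abs_nonneg x]

/-- Likelihoods at a common time multiply to a single likelihood, with the harmonic-type volatility
`σhat` and the precision-weighted mean of the observations. -/
lemma hfun_effective {ι : Type*} {A : Finset ι} (hA : A.Nonempty) {σ : ι → ℝ}
    (hσ : ∀ i, 0 < σ i) {σhat : ℝ} (hσhat : σhat = (√(∑ i ∈ A, ((σ i) ^ 2)⁻¹))⁻¹)
    {t : ℝ} (ht : t < 1) (x : ℝ) (y : ι → ℝ) :
    hfun x (σhat ^ 2 * ∑ i ∈ A, ((σ i) ^ 2)⁻¹ * y i) t σhat = ∏ i ∈ A, hfun x (y i) t (σ i) := by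
  have hpos : 0 < ∑ i ∈ A, ((σ i) ^ 2)⁻¹ :=
    Finset.sum_pos (fun i _ => inv_pos.2 (pow_pos (hσ i) 2)) hA
  have hsq : σhat ^ 2 = (∑ i ∈ A, ((σ i) ^ 2)⁻¹)⁻¹ := by
    rw [hσhat, inv_pow, Real.sq_sqrt hpos.le]
  simp only [hfun]
  rw [← Real.exp_sum, hsq]
  congr 1
  have h1 : 1 - t ≠ 0 := by linarith
  have hterm : ∀ i, (x * y i - t * x ^ 2 / 2) / (σ i ^ 2 * (1 - t))
      = (x * (((σ i) ^ 2)⁻¹ * y i) - ((σ i) ^ 2)⁻¹ * (t * x ^ 2 / 2)) / (1 - t) := by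
    intro i
    have := (hσ i).ne'
    field_simp
  simp only [hterm]
  rw [← Finset.sum_div, Finset.sum_sub_distrib, ← Finset.mul_sum, ← Finset.sum_mul]
  have hS := hpos.ne'
  generalize ∑ i ∈ A, ((σ i) ^ 2)⁻¹ = S at hS ⊢
  field_simp

/-! ### The conditional distribution -/

/-- Proposition 2.7 for a deterministic switching pattern.
With active set `A_t = {i : J⁽ⁱ⁾(t) = 1} ≠ ∅`, effective volatility
`σ̂_t = (∑_{i∈A_t} σᵢ⁻²)^{-1/2}`, effective information `ξ̂_t = σ̂_t² ∑_{i∈A_t} σᵢ⁻² ξ⁽ⁱ⁾_t`, and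
complementary information `η_t(x) = ∏_{i∉A_t} h(x, ξ⁽ⁱ⁾_{τ⁽ⁱ⁾_t}, τ⁽ⁱ⁾_t, σᵢ)`, the conditional
expectation of `φ(X)` given the modulated observations is the `(h·η)`-weighted Bayes ratio. -/
theorem effective_complementary_conditional_distribution
    {Ω : Type*} [m0 : MeasurableSpace Ω] (P : Measure Ω) [IsProbabilityMeasure P]
    (n : ℕ) (X : Ω → ℝ) (hX : Measurable X)
    (ν : Measure ℝ) [IsProbabilityMeasure ν] (hlaw : Measure.map X P = ν)
    (hν : FiniteExpMoments ν)
    (β : Fin n → ℝ → Ω → ℝ) (hβ : ∀ i, IsStdBrownianBridge P (β i))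
    (hindep : iIndep (fun j : Option (Fin n) =>
        Option.rec (MeasurableSpace.comap X inferInstance)
          (fun i => sigmaUpTo (β i) 1) j) P)
    (σ : Fin n → ℝ) (hσ : ∀ i, 0 < σ i)
    (ξ : Fin n → ℝ → Ω → ℝ) (hξ : ∀ i s ω, ξ i s ω = s * X ω + σ i * β i s ω)
    (J : Fin n → ℝ → ℝ)
    (hJ01 : ∀ i s, J i s = 0 ∨ J i s = 1)
    (hrc : ∀ i s, ContinuousWithinAt (J i) (Set.Ici s) s)
    (D : Finset ℝ) (hD : ∀ i, ∀ s ∉ D, ContinuousAt (J i) s)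
    (τ : Fin n → ℝ → ℝ)
    (hτ : ∀ i t, τ i t = max 0 (sSup {u ∈ Set.Icc (0:ℝ) t | J i u = 1}))
    (t : ℝ) (ht : t ∈ Set.Ico (0:ℝ) 1)
    (hA : ∃ i, J i t = 1)
    (σhat : ℝ)
    (hσhat : σhat
        = (Real.sqrt (∑ i ∈ Finset.univ.filter (fun i => J i t = 1), ((σ i) ^ 2)⁻¹))⁻¹)
    (ξhat : Ω → ℝ)
    (hξhat : ∀ ω, ξhat ω
        = σhat ^ 2 * ∑ i ∈ Finset.univ.filter (fun i => J i t = 1), ((σ i) ^ 2)⁻¹ * ξ i t ω)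
    (η : ℝ → Ω → ℝ)
    (hη : ∀ x ω, η x ω
        = ∏ i ∈ Finset.univ.filter (fun i => ¬ J i t = 1),
            hfun x (ξ i (τ i t) ω) (τ i t) (σ i))
    (φ : ℝ → ℝ) (hφm : Measurable φ) (C : ℝ) (hφb : ∀ x, |φ x| ≤ C) :
    P[fun ω => φ (X ω) |
        ⨆ i, ⨆ u ∈ Set.Icc (0:ℝ) t,
          MeasurableSpace.comap (fun ω => J i u * ξ i u ω) inferInstance]
      =ᵐ[P] fun ω =>
        (∫ x, φ x * hfun x (ξhat ω) t σhat * η x ω ∂ν) /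
          (∫ x, hfun x (ξhat ω) t σhat * η x ω ∂ν) := by
  have hm : ∀ i u, Measurable (β i u) := fun i u => (hβ i).1 u
  have hξm : ∀ i u, Measurable (ξ i u) := fun i u => by
    rw [show ξ i u = fun ω => u * X ω + σ i * β i u ω from funext (hξ i u)]
    fun_prop
  have hξc : ∀ i ω, ContinuousOn (fun u => ξ i u ω) (Set.Icc 0 1) := fun i ω => by
    simp only [hξ]
    have := (hβ i).2.1 ω
    fun_prop
  have hle_of_mem : ∀ i, ∀ u ∈ {u ∈ Set.Icc (0:ℝ) t | J i u = 1}, u ≤ t := fun i u hu => hu.1.2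
  -- the last time up to `t` at which the `i`-th observation is available
  set T : Fin n → ℝ := fun i => if J i t = 1 then t else τ i t with hTdef
  have hTt : ∀ i, T i ≤ t := by
    intro i
    simp only [hTdef]
    split_ifs
    · exact le_rfl
    · rw [hτ]
      exact max_le ht.1 (Real.sSup_le (hle_of_mem i) ht.1)
  have hT : ∀ i, T i ∈ Set.Ico (0:ℝ) 1 := by
    intro i
    refine ⟨?_, (hTt i).trans_lt ht.2⟩
    simp only [hTdef]
    split_ifs
    · exact ht.1
    · rw [hτ]; exact le_max_left _ _
  have hle_T : ∀ i, ∀ u ∈ Set.Icc (0:ℝ) t, J i u = 1 → u ≤ T i := by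
    intro i u hu hJu
    simp only [hTdef]
    split_ifs
    · exact hu.2
    · rw [hτ]
      exact (le_csSup ⟨t, hle_of_mem i⟩ ⟨hu, hJu⟩).trans (le_max_right _ _)
  -- the Bayes weight is the product of the individual likelihoods
  have hweight : ∀ x ω, hfun x (ξhat ω) t σhat * η x ω
      = ∏ i, hfun x (ξ i (T i) ω) (T i) (σ i) := by
    intro x ω
    rw [hη, hξhat, hfun_effective (by obtain ⟨i, hi⟩ := hA; exact ⟨i, by simp [hi]⟩) hσ hσhat ht.2,
      ← Finset.prod_filter_mul_prod_filter_not Finset.univ (fun i => J i t = 1)]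
    congr 1
    · refine Finset.prod_congr rfl fun i hi => ?_
      rw [show T i = t from if_pos (Finset.mem_filter.1 hi).2]
    · refine Finset.prod_congr rfl fun i hi => ?_
      rw [show T i = τ i t from if_neg (Finset.mem_filter.1 hi).2]
  simp only [mul_assoc, hweight]
  -- `b` and `Y` are the noise and the observation on the path space `{(i, s) | 0 ≤ s ≤ T i}`, and
  -- `w i` is its index `(i, T i)`, the only coordinates the density `H` depends on
  set w : (i : Fin n) → {p : Fin n × ℝ // p.2 ∈ Set.Icc 0 (T p.1)} :=
    fun i => ⟨(i, T i), (hT i).1, le_rfl⟩ with hw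
  set b : Ω → {p : Fin n × ℝ // p.2 ∈ Set.Icc 0 (T p.1)} → ℝ :=
    fun ω p => σ p.1.1 * β p.1.1 p.1.2 ω with hb
  set Y : Ω → {p : Fin n × ℝ // p.2 ∈ Set.Icc 0 (T p.1)} → ℝ :=
    fun ω p => ξ p.1.1 p.1.2 ω with hY
  set H : ℝ → ({p : Fin n × ℝ // p.2 ∈ Set.Icc 0 (T p.1)} → ℝ) → ℝ :=
    fun x e => ∏ i, hfun x (e (w i)) (T i) (σ i) with hH
  have hbm : Measurable b := measurable_pi_lambda _ fun p => by fun_prop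
  have hYm : Measurable Y := measurable_pi_lambda _ fun p => hξm _ _
  have hHm : Measurable (Function.uncurry H) := by
    simp only [hH, hfun, Function.uncurry_def]
    fun_prop
  have hindβ : iIndep (fun i => sigmaUpTo (β i) 1) P :=
    hindep.precomp (g := some) (Option.some_injective _)
  have hσle : ∀ i, sigmaUpTo (β i) 1 ≤ m0 := fun i =>
    iSup₂_le fun s _ => (hm i s).comap_le
  have hXb : IndepFun X b P := by
    have h := indep_iSup_of_disjoint (S := {none}) (T := Set.range some)
      (by rintro (_ | i); exacts [hX.comap_le, hσle i]) hindep (by simp)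
    rw [iSup_singleton, iSup_range] at h
    refine indep_of_indep_of_le_right h (Measurable.comap_le ?_)
    refine @measurable_pi_lambda _ _ _ (⨆ i, sigmaUpTo (β i) 1) _ _ fun p =>
      Measurable.const_mul ?_ _
    refine (comap_measurable (β p.1.1 p.1.2)).mono ?_ le_rfl
    refine le_trans ?_ (le_iSup _ p.1.1)
    exact le_iSup₂_of_le p.1.2 ⟨p.2.1, p.2.2.trans (hT _).2.le⟩ le_rfl
  have hPb : IsProbabilityMeasure (P.map b) := Measure.isProbabilityMeasure_map hbm.aemeasurable
  have hjoint : P.map (fun ω => (X ω, Y ω))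
      = (ν.prod (P.map b)).withDensity (fun p => ENNReal.ofReal (H p.1 p.2)) := by
    have h := map_prodMk_eq_withDensity hX hbm hXb
      (sh := fun x e p => p.1.2 * x + e p)
      (H := fun x e => ENNReal.ofReal (H x e))
      (measurable_pi_lambda _ fun p => by simp only [Function.uncurry_def]; fun_prop)
      (hHm.ennreal_ofReal)
      (fun x => map_shift_paths hβ hindβ hσ hT x)
    rw [hlaw] at h
    convert h using 4
    · funext p
      exact hξ _ _ _
    · rfl
  have hbayes := fun B hB => bayes_setIntegral hX hYm hHm
    (fun x e => Finset.prod_pos fun i _ => Real.exp_pos _)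
    (fun e => integrable_prod_hfun hν hT fun i => e (w i)) hjoint hφm hφb (B := B) hB
  have hZm : Measurable (fun ω => (∫ x, φ x * H x (Y ω) ∂ν) / (∫ x, H x (Y ω) ∂ν)) :=
    (measurable_bayesRatio (ν := ν) hHm hφm).comp hYm
  have hZint : Integrable (fun ω => (∫ x, φ x * H x (Y ω) ∂ν) / (∫ x, H x (Y ω) ∂ν)) P :=
    Integrable.of_bound hZm.aestronglyMeasurable C
      (ae_of_all _ fun ω => (hbayes Set.univ MeasurableSet.univ).1 (Y ω))
  have hβ0 : ∀ i, ∀ᵐ ω ∂P, β i 0 ω = 0 := fun i => (hβ i).ae_zero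
  set m : MeasurableSpace Ω := ⨆ i, ⨆ u ∈ Set.Icc (0:ℝ) t,
          MeasurableSpace.comap (fun ω => J i u * ξ i u ω) inferInstance with hmdef
  have hmm0 : m ≤ m0 := iSup_le fun i => iSup₂_le fun u _ =>
    ((hξm i u).const_mul (J i u)).comap_le
  have hmY : m ≤ MeasurableSpace.comap Y inferInstance := by
    refine iSup_le fun i => iSup₂_le fun u hu => Measurable.comap_le ?_
    rcases hJ01 i u with h0 | h1
    · simp only [h0, zero_mul]
      exact measurable_const
    · simp only [h1, one_mul]
      exact (measurable_pi_apply (⟨(i, u), hu.1, hle_T i u hu h1⟩ :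
        {p : Fin n × ℝ // p.2 ∈ Set.Icc 0 (T p.1)})).comp (comap_measurable Y)
  have hξobs : ∀ i, ∀ u ∈ Set.Icc (0:ℝ) t, J i u = 1 → Measurable[m] (ξ i u) := by
    intro i u hu h1
    have h2 : Measurable[m] (fun ω => J i u * ξ i u ω) :=
      (comap_measurable (fun ω => J i u * ξ i u ω)).mono
        (le_iSup_of_le i (le_iSup₂_of_le u hu le_rfl)) le_rfl
    simpa only [h1, one_mul] using h2
  -- the last observed value of each channel is observable up to a null set
  have hlast : ∀ i, ∃ f : Ω → ℝ, Measurable[m] f ∧ ∀ᵐ ω ∂P, ξ i (T i) ω = f ω := by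
    intro i
    by_cases hJt : J i t = 1
    · refine ⟨ξ i (T i), ?_, ae_of_all _ fun _ => rfl⟩
      rw [show T i = t from if_pos hJt]
      exact hξobs i t ⟨ht.1, le_rfl⟩ hJt
    have hTi : T i = max 0 (sSup {u ∈ Set.Icc (0:ℝ) t | J i u = 1}) := by
      rw [← hτ]; exact if_neg hJt
    rcases Set.eq_empty_or_nonempty {u ∈ Set.Icc (0:ℝ) t | J i u = 1} with hemp | hne
    · -- the channel was never visible: `sSup ∅ = 0`, so `T i = 0`, where `ξ i` vanishes
      refine ⟨fun _ => 0, measurable_const, ?_⟩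
      rw [hemp, Real.sSup_empty, max_self] at hTi
      filter_upwards [hβ0 i] with ω hω
      rw [hTi, hξ, hω]; ring
    · refine ⟨ξ i (T i), ?_, ae_of_all _ fun _ => rfl⟩
      have hlub : IsLUB {u ∈ Set.Icc (0:ℝ) t | J i u = 1} (T i) := by
        rw [hTi, max_eq_right (Real.sSup_nonneg fun u hu => hu.1.1)]
        exact isLUB_csSup hne ⟨t, hle_of_mem i⟩
      obtain ⟨u, -, -, hut, hu⟩ := hlub.exists_seq_monotone_tendsto hne
      refine measurable_of_tendsto_metrizable (f := fun k => ξ i (u k))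
        (fun k => hξobs i (u k) (hu k).1 (hu k).2) ?_
      refine tendsto_pi_nhds.2 fun ω => ?_
      refine ((hξc i ω) (T i) ⟨(hT i).1, (hT i).2.le⟩).tendsto.comp ?_
      exact tendsto_nhdsWithin_iff.2 ⟨hut, Eventually.of_forall fun k =>
        ⟨(hu k).1.1, (hu k).1.2.trans ht.2.le⟩⟩
  choose f hfm hfae using hlast
  have hae : ∀ᵐ ω ∂P, ∀ i, ξ i (T i) ω = f i ω := ae_all_iff.2 hfae
  refine (ae_eq_condExp_of_forall_setIntegral_eq hmm0 ?_ ?_ ?_ ?_).symm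
  · exact Integrable.of_bound (hφm.comp hX).aestronglyMeasurable C
      (ae_of_all _ fun ω => hφb (X ω))
  · exact fun s _ _ => hZint.integrableOn
  · intro s hs _
    obtain ⟨B, hB, rfl⟩ := hmY s hs
    exact (hbayes B hB).2
  · have hG : Measurable (Function.uncurry fun (x : ℝ) (y : Fin n → ℝ) =>
        ∏ i, hfun x (y i) (T i) (σ i)) := by
      simp only [hfun, Function.uncurry_def]
      fun_prop
    refine ⟨_, ((measurable_bayesRatio (ν := ν) hG hφm).comp
      (@measurable_pi_lambda _ _ _ m _ (fun ω i => f i ω) hfm)).stronglyMeasurable, ?_⟩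
    filter_upwards [hae] with ω hω
    simp only [Function.comp_apply, hω]

end
end
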